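/- Let n ≥ 2 and let M^n be a smooth, closed, strictly convex hypersurface in ℝ^{n+1} enclosing the origin, with positive support function h. If M satisfies the isotropic L_p dual Minkowski equation h^{p-1} |Dh|^{n+1-q} 𝒦 = 1 on S^n (where 𝒦 is the Gauss curvature and Dh = ∇̄h + h x is the inverse Gauss map), and if −(n+1) < p ≤ −1 and n ≤ q ≤ n+1, then M is the unit sphere. -/

import Mathlib

open MeasureTheory Matrix Metric
open scoped RealInnerProductSpace

noncomputable section

/-- Euclidean space `ℝ^{n+1}`. -/
abbrev Euc (n : ℕ) : Type := EuclideanSpace ℝ (Fin (n + 1))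

/-- The Euclidean Hessian matrix of `H : ℝ^{n+1} → ℝ` at `x`. -/
def ehess (n : ℕ) (H : Euc n → ℝ) (x : Euc n) : Matrix (Fin (n + 1)) (Fin (n + 1)) ℝ :=
  Matrix.of fun i j =>
    fderiv ℝ (fun y => fderiv ℝ H y (EuclideanSpace.single j 1)) x (EuclideanSpace.single i 1)

/-- For the 1-homogeneous extension `H` of the support function `h` and `x ∈ S^n`, the matrix
`D²H(x) + h(x)·x xᵀ`.  Its restriction to the tangent space `x^⊥ = T_x S^n` is
`A[h] = ∇̄²h + h ḡ`, and `x` is an eigenvector with eigenvalue `h(x)`. -/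
def bmat (n : ℕ) (H : Euc n → ℝ) (x : Euc n) : Matrix (Fin (n + 1)) (Fin (n + 1)) ℝ :=
  ehess n H x + Matrix.of fun i j => H x * (x i * x j)

/-- `σ_n = det A[h] = det(∇̄²h + h ḡ)/det ḡ`, computed as `det(bmat)/h`. -/
def sigman (n : ℕ) (H : Euc n → ℝ) (x : Euc n) : ℝ :=
  Matrix.det (bmat n H x) / H x

/-- The Gauss curvature `𝒦 = 1/σ_n`. -/
def gaussCurv (n : ℕ) (H : Euc n → ℝ) (x : Euc n) : ℝ := (sigman n H x)⁻¹

/-- The round (spherical) gradient `∇̄f` at `x ∈ S^n`: the Euclidean gradient of the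
0-homogeneous extension `y ↦ f(y/‖y‖)`.  It depends only on `f|_{S^n}` and lies in `T_x S^n`. -/
def sphGrad (n : ℕ) (f : Euc n → ℝ) (x : Euc n) : Euc n :=
  gradient (fun y => f (‖y‖⁻¹ • y)) x

/-- The function `log (h^{n+2}/𝒦)` (as a function of `y`; on the sphere it agrees with the
centro-affine expression appearing in the paper). -/
def logQ (n : ℕ) (H : Euc n → ℝ) (y : Euc n) : ℝ :=
  Real.log ((H y) ^ (n + 2) / gaussCurv n H y)

/-- The centro-affine inner product `g(∇f, ∇u) = h ⟨A[h]⁻¹ ∇̄f, ∇̄u⟩` of the `g`-gradients of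
`f` and `u`, where `g = A[h]/h` is the centro-affine metric. -/
def gInner (n : ℕ) (H f u : Euc n → ℝ) (x : Euc n) : ℝ :=
  H x * ∑ i, (bmat n H x)⁻¹.mulVec (fun j => sphGrad n f x j) i * sphGrad n u x i

/-- The squared centro-affine norm `|∇f|_g²` of the `g`-gradient of `f`. -/
def gNormSq (n : ℕ) (H f : Euc n → ℝ) (x : Euc n) : ℝ := gInner n H f f x

/-- The centro-affine Laplacian `Δf = div_g(∇ f)` (with respect to the centro-affine connection
`∇` induced by the centro-affine normal `ξ = X`, and the centro-affine metric `g = A[h]/h`),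
computed via the identity `Δf = tr_g(A[hf]/h) - n f`, i.e.
`Δf = tr(B[h]⁻¹ B[hf]) - (n+1) f` where `B[u] = D²ũ + u·x xᵀ` for the 1-homogeneous
extension `ũ` of `u`. -/
def caLap (n : ℕ) (H f : Euc n → ℝ) (x : Euc n) : ℝ :=
  Matrix.trace ((bmat n H x)⁻¹ * bmat n (fun y => H y * f (‖y‖⁻¹ • y)) x) - (n + 1) * f x

/-- The spherical Lebesgue measure on `S^n ⊂ ℝ^{n+1}` (up to a positive constant). -/
def sphMeasure (n : ℕ) : Measure (sphere (0 : Euc n) 1) :=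
  (volume : Measure (Euc n)).toSphere

/-- The density of the cone-volume-type measure `dV = h σ_n dμ` with respect to the spherical
Lebesgue measure. -/
def volDens (n : ℕ) (H : Euc n → ℝ) (x : Euc n) : ℝ := H x * sigman n H x

lemma bm1_compact {A B C : Set ℝ} (hA : IsCompact A) (hB : IsCompact B) (hAn : A.Nonempty)
    (hBn : B.Nonempty) (h : ∀ x ∈ A, ∀ y ∈ B, (x + y) / 2 ∈ C) :
    volume A + volume B ≤ 2 * volume C := by
  obtain ⟨α, hα, hα'⟩ := hA.exists_isGreatest hAn
  obtain ⟨β, hβ, hβ'⟩ := hB.exists_isLeast hBn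
  set A1 : Set ℝ := (fun z => 2 * z) ⁻¹' ((fun z => z + (-β)) ⁻¹' A) with hA1
  set B1 : Set ℝ := (fun z => 2 * z) ⁻¹' ((fun z => z + (-α)) ⁻¹' B) with hB1
  have vA : 2 * volume A1 = volume A := by
    rw [hA1, Real.volume_preimage_mul_left (by norm_num), measure_preimage_add_right,
      ← mul_assoc]
    have : (2 : ENNReal) * ENNReal.ofReal |(2:ℝ)⁻¹| = 1 := by
      rw [abs_of_pos (by norm_num), ENNReal.ofReal_inv_of_pos (by norm_num)]
      simp [ENNReal.mul_inv_cancel]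
    rw [this, one_mul]
  have vB : 2 * volume B1 = volume B := by
    rw [hB1, Real.volume_preimage_mul_left (by norm_num), measure_preimage_add_right,
      ← mul_assoc]
    have : (2 : ENNReal) * ENNReal.ofReal |(2:ℝ)⁻¹| = 1 := by
      rw [abs_of_pos (by norm_num), ENNReal.ofReal_inv_of_pos (by norm_num)]
      simp [ENNReal.mul_inv_cancel]
    rw [this, one_mul]
  have mB : MeasurableSet B1 := by
    apply measurableSet_preimage (by fun_prop)
    exact measurableSet_preimage (by fun_prop) hB.measurableSet
  have hsub : A1 ∪ B1 ⊆ C := by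
    rintro z (hz | hz)
    · have := h _ hz β hβ
      convert this using 1; ring
    · have := h α hα _ hz
      convert this using 1; ring
  have hdis : AEDisjoint volume A1 B1 := by
    refine measure_mono_null (t := {(α + β) / 2}) ?_ (by simp)
    rintro z ⟨hz1, hz2⟩
    have h1 := hα' hz1
    have h2 := hβ' hz2
    simp only [Set.mem_singleton_iff]
    linarith
  rw [← vA, ← vB, ← mul_add, ← measure_union₀ mB.nullMeasurableSet hdis]
  gcongr

lemma bm1 {A B C : Set ℝ} (hA : MeasurableSet A) (hB : MeasurableSet B) (hAn : A.Nonempty)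
    (hBn : B.Nonempty) (h : ∀ x ∈ A, ∀ y ∈ B, (x + y) / 2 ∈ C) :
    volume A + volume B ≤ 2 * volume C := by
  obtain ⟨a, ha⟩ := hAn
  obtain ⟨b, hb⟩ := hBn
  rw [hA.measure_eq_iSup_isCompact, hB.measure_eq_iSup_isCompact]
  simp only [iSup_and']
  refine ENNReal.biSup_add_biSup_le' (p := fun K => K ⊆ A ∧ IsCompact K)
    (q := fun K => K ⊆ B ∧ IsCompact K) ⟨∅, by simp⟩ ⟨∅, by simp⟩ ?_
  rintro A' ⟨hA1, hA2⟩ B' ⟨hB1, hB2⟩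
  calc volume A' + volume B' ≤ volume (insert a A') + volume (insert b B') := by
        gcongr <;> exact Set.subset_insert _ _
    _ ≤ 2 * volume C := by
        refine bm1_compact (hA2.insert a) (hB2.insert b) ⟨a, by simp⟩ ⟨b, by simp⟩ ?_
        intro x hx y hy
        exact h x (Set.insert_subset ha hA1 hx) y (Set.insert_subset hb hB1 hy)

lemma pl1_real {f g h : ℝ → ℝ} (hf : Measurable f) (hg : Measurable g) (hh : Measurable h)
    (f0 : ∀ x, 0 ≤ f x) (g0 : ∀ x, 0 ≤ g x) (h0 : ∀ x, 0 ≤ h x)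
    (f1 : ∀ x, f x ≤ 1) (g1 : ∀ x, g x ≤ 1)
    (fs : ∀ s < 1, ∃ x, s < f x) (gs : ∀ s < 1, ∃ x, s < g x)
    (H : ∀ x y, f x * g y ≤ h ((x + y) / 2) ^ 2) :
    (∫⁻ x, ENNReal.ofReal (f x)) + (∫⁻ x, ENNReal.ofReal (g x))
      ≤ 2 * ∫⁻ x, ENNReal.ofReal (h x) := by
  rw [lintegral_eq_lintegral_meas_lt _ (.of_forall f0) hf.aemeasurable,
    lintegral_eq_lintegral_meas_lt _ (.of_forall g0) hg.aemeasurable,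
    lintegral_eq_lintegral_meas_lt _ (.of_forall h0) hh.aemeasurable]
  have mf : Measurable fun t : ℝ => volume {a | t < f a} :=
    Antitone.measurable fun s t hst => measure_mono fun x hx => lt_of_le_of_lt hst hx
  rw [← lintegral_add_left mf, ← lintegral_const_mul' _ _ (by simp)]
  refine setLIntegral_mono' measurableSet_Ioi fun s hs => ?_
  rcases lt_or_ge s 1 with h1 | h1
  · refine bm1 (measurableSet_lt measurable_const hf) (measurableSet_lt measurable_const hg)
      (fs s h1) (gs s h1) ?_
    intro x hx y hy
    simp only [Set.mem_ofPred_eq, Set.mem_Ioi] at hx hy hs ⊢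
    have := H x y
    have h2 : s * s < f x * g y := mul_lt_mul'' hx hy hs.le hs.le
    nlinarith [h0 ((x + y) / 2)]
  · have e1 : {a | s < f a} = ∅ := by ext x; simp; linarith [f1 x]
    have e2 : {a | s < g a} = ∅ := by ext x; simp; linarith [g1 x]
    simp [e1, e2]

lemma ennreal_amgm {x y z : ENNReal} (h : x + y ≤ 2 * z) : x * y ≤ z ^ 2 := by
  rcases eq_or_ne z ⊤ with rfl | hz
  · simp
  have hxy : x + y ≠ ⊤ := ne_top_of_le_ne_top (ENNReal.mul_ne_top (by simp) hz) h
  have hx : x ≠ ⊤ := fun h => hxy (by simp [h])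
  have hy : y ≠ ⊤ := fun h => hxy (by simp [h])
  lift x to NNReal using hx
  lift y to NNReal using hy
  lift z to NNReal using hz
  norm_cast at h ⊢
  rw [← NNReal.coe_le_coe] at h ⊢
  push_cast at h ⊢
  nlinarith [sq_nonneg ((x:ℝ) - y), x.2, y.2, z.2]

lemma sup_aux {f : ℝ → ENNReal} (ap : 0 < (⨆ x, f x).toReal) (a_top : (⨆ x, f x) ≠ ⊤) :
    ∀ s < 1, ∃ x, s < (f x).toReal / (⨆ x, f x).toReal := by
  intro s hs
  have h1 : max s 0 < 1 := max_lt hs one_pos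
  have : ENNReal.ofReal (max s 0 * (⨆ x, f x).toReal) < ⨆ x, f x := by
    rw [ENNReal.ofReal_lt_iff_lt_toReal (by positivity) a_top]
    nlinarith
  obtain ⟨x, hx⟩ := lt_iSup_iff.1 this
  refine ⟨x, ?_⟩
  rw [lt_div_iff₀ ap]
  have h2 := (ENNReal.ofReal_lt_iff_lt_toReal (by positivity)
    (ne_top_of_le_ne_top a_top (le_iSup f x))).1 hx
  have : s * (⨆ x, f x).toReal ≤ max s 0 * (⨆ x, f x).toReal := by
    gcongr; exact le_max_left _ _
  linarith

lemma pl1_bdd {f g h : ℝ → ENNReal} (hf : Measurable f) (hg : Measurable g) (hh : Measurable h)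
    {k : NNReal} (fk : ∀ x, f x ≤ k) (gk : ∀ x, g x ≤ k)
    (H : ∀ x y, f x * g y ≤ h ((x + y) / 2) ^ 2) :
    (∫⁻ x, f x) * (∫⁻ x, g x) ≤ (∫⁻ x, h x) ^ 2 := by
  set a := ⨆ x, f x with ha
  set b := ⨆ x, g x with hb
  have fa : ∀ x, f x ≤ a := fun x => le_iSup f x
  have gb : ∀ x, g x ≤ b := fun x => le_iSup g x
  have a_top : a ≠ ⊤ := ne_top_of_le_ne_top ENNReal.coe_ne_top (iSup_le fk)
  have b_top : b ≠ ⊤ := ne_top_of_le_ne_top ENNReal.coe_ne_top (iSup_le gk)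
  rcases eq_or_ne a 0 with a0 | a0
  · have : ∀ x, f x = 0 := fun x => le_antisymm (a0 ▸ fa x) bot_le
    simp [this]
  rcases eq_or_ne b 0 with b0 | b0
  · have : ∀ x, g x = 0 := fun x => le_antisymm (b0 ▸ gb x) bot_le
    simp [this]
  have ap : 0 < a.toReal := ENNReal.toReal_pos a0 a_top
  have bp : 0 < b.toReal := ENNReal.toReal_pos b0 b_top
  set c := Real.sqrt (a.toReal * b.toReal) with hc
  have cp : 0 < c := Real.sqrt_pos.2 (mul_pos ap bp)
  have c2 : c ^ 2 = a.toReal * b.toReal := Real.sq_sqrt (by positivity)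
  have f_top : ∀ x, f x ≠ ⊤ := fun x => ne_top_of_le_ne_top a_top (fa x)
  have g_top : ∀ x, g x ≠ ⊤ := fun x => ne_top_of_le_ne_top b_top (gb x)
  have main := pl1_real (f := fun x => (f x).toReal / a.toReal)
    (g := fun x => (g x).toReal / b.toReal)
    (h := fun x => (min (h x) (ENNReal.ofReal c)).toReal / c)
    (by fun_prop) (by fun_prop) (by fun_prop)
    (fun x => by positivity) (fun x => by positivity) (fun x => by positivity)
    (fun x => by
      rw [div_le_one ap]; exact ENNReal.toReal_mono a_top (fa x))
    (fun x => by
      rw [div_le_one bp]; exact ENNReal.toReal_mono b_top (gb x))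
    (sup_aux ap a_top) (sup_aux bp b_top)
    (fun x y => by
      have e : (f x).toReal / a.toReal * ((g y).toReal / b.toReal)
          = (f x).toReal * (g y).toReal / c ^ 2 := by rw [c2]; field_simp
      rw [e, div_pow]
      gcongr
      rcases le_total (ENNReal.ofReal c) (h ((x + y) / 2)) with hle | hle
      · rw [min_eq_right hle, ENNReal.toReal_ofReal cp.le, c2]
        gcongr
        · exact fa x
        · exact gb y
      · rw [min_eq_left hle]
        have ht : h ((x + y) / 2) ≠ ⊤ := ne_top_of_le_ne_top ENNReal.ofReal_ne_top hle
        have := ENNReal.toReal_mono (ENNReal.pow_ne_top ht) (H x y)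
        rwa [ENNReal.toReal_mul, ENNReal.toReal_pow] at this)
  have main2 := ennreal_amgm main
  have If : ∫⁻ x, f x = a * ∫⁻ x, ENNReal.ofReal ((f x).toReal / a.toReal) := by
    rw [← lintegral_const_mul' _ _ a_top]
    refine lintegral_congr fun x => ?_
    rw [ENNReal.ofReal_div_of_pos ap, ENNReal.ofReal_toReal a_top, ENNReal.ofReal_toReal (f_top x),
      ENNReal.mul_div_cancel a0 a_top]
  have Ig : ∫⁻ x, g x = b * ∫⁻ x, ENNReal.ofReal ((g x).toReal / b.toReal) := by
    rw [← lintegral_const_mul' _ _ b_top]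
    refine lintegral_congr fun x => ?_
    rw [ENNReal.ofReal_div_of_pos bp, ENNReal.ofReal_toReal b_top, ENNReal.ofReal_toReal (g_top x),
      ENNReal.mul_div_cancel b0 b_top]
  have Ih : ENNReal.ofReal c * ∫⁻ x, ENNReal.ofReal ((min (h x) (ENNReal.ofReal c)).toReal / c)
      ≤ ∫⁻ x, h x := by
    rw [← lintegral_const_mul' _ _ ENNReal.ofReal_ne_top]
    refine lintegral_mono fun x => ?_
    rw [← ENNReal.ofReal_mul cp.le, mul_div_cancel₀ _ cp.ne', ENNReal.ofReal_toReal (by simp)]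
    exact min_le_left _ _
  have cc : ENNReal.ofReal c ^ 2 = a * b := by
    rw [← ENNReal.ofReal_pow cp.le, c2, ENNReal.ofReal_mul ap.le, ENNReal.ofReal_toReal a_top,
      ENNReal.ofReal_toReal b_top]
  calc _ = (a * b) * ((∫⁻ x, ENNReal.ofReal ((f x).toReal / a.toReal)) *
        ∫⁻ x, ENNReal.ofReal ((g x).toReal / b.toReal)) := by rw [If, Ig]; ring
    _ ≤ (a * b) * _ := mul_le_mul_right main2 _
    _ = _ := by rw [← cc, ← mul_pow]
    _ ≤ _ := by gcongr

lemma pl1 {f g h : ℝ → ENNReal} (hf : Measurable f) (hg : Measurable g) (hh : Measurable h)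
    (H : ∀ x y, f x * g y ≤ h ((x + y) / 2) ^ 2) :
    (∫⁻ x, f x) * (∫⁻ x, g x) ≤ (∫⁻ x, h x) ^ 2 := by
  have key : ∀ f : ℝ → ENNReal, Measurable f →
      ∫⁻ x, f x = ⨆ k : ℕ, ∫⁻ x, min (f x) k := by
    intro f hf
    rw [← lintegral_iSup (fun k => by fun_prop)
      (fun i j hij x => by dsimp; gcongr)]
    refine lintegral_congr fun x => ?_
    rw [← inf_iSup_eq, ENNReal.iSup_natCast]
    simp
  rw [key f hf, key g hg]
  rw [ENNReal.iSup_mul]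
  refine iSup_le fun i => ?_
  rw [ENNReal.mul_iSup]
  refine iSup_le fun j => ?_
  refine pl1_bdd (k := max (i : NNReal) (j : NNReal)) (by fun_prop) (by fun_prop) hh
      (fun x => (min_le_right _ _).trans ?_)
      (fun x => (min_le_right _ _).trans ?_)
      (fun x y => (mul_le_mul' (min_le_left _ _) (min_le_left _ _)).trans (H x y))
  · exact_mod_cast le_max_left (i : NNReal) (j : NNReal)
  · exact_mod_cast le_max_right (i : NNReal) (j : NNReal)

lemma plN (N : ℕ) : ∀ {f g h : (Fin N → ℝ) → ENNReal}, Measurable f → Measurable g →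
    Measurable h →
    (∀ x y, f x * g y ≤ h ((1 / 2 : ℝ) • (x + y)) ^ 2) →
    (∫⁻ x, f x) * (∫⁻ x, g x) ≤ (∫⁻ x, h x) ^ 2 := by
  induction N with
  | zero =>
    intro f g h hf hg hh H
    have := H 0 0
    rw [volume_pi, Measure.pi_of_empty _ 0]
    simpa [lintegral_dirac] using this
  | succ N ih =>
    intro f g h hf hg hh H
    have key : ∀ f : (Fin (N + 1) → ℝ) → ENNReal, Measurable f →
        ∫⁻ x, f x = ∫⁻ a : ℝ, ∫⁻ z : Fin N → ℝ, f (Fin.cons a z) := by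
      intro f hf
      rw [← ((volume_preserving_piFinSuccAbove (fun _ => ℝ) 0).symm).lintegral_comp hf]
      rw [Measure.volume_eq_prod, lintegral_prod]
      · simp [MeasurableEquiv.piFinSuccAbove, Fin.insertNthEquiv]
      · exact (hf.comp (MeasurableEquiv.measurable _)).aemeasurable
    have cm : ∀ a : ℝ, Measurable fun z : Fin N → ℝ => (Fin.cons a z : Fin (N + 1) → ℝ) := by
      intro a
      refine measurable_pi_iff.2 fun i => ?_
      refine Fin.cases ?_ (fun i => ?_) i <;> simp <;> fun_prop
    have cm2 : Measurable fun z : ℝ × (Fin N → ℝ) => (Fin.cons z.1 z.2 : Fin (N + 1) → ℝ) := by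
      refine measurable_pi_iff.2 fun i => ?_
      refine Fin.cases ?_ (fun i => ?_) i <;> simp <;> fun_prop
    rw [key f hf, key g hg, key h hh]
    refine pl1 (Measurable.lintegral_prod_right (hf.comp cm2))
      (Measurable.lintegral_prod_right (hg.comp cm2))
      (Measurable.lintegral_prod_right (hh.comp cm2)) fun a b => ?_
    refine ih (hf.comp (cm a)) (hg.comp (cm b)) (hh.comp (cm _)) fun x y => ?_
    refine (H _ _).trans (le_of_eq ?_)
    congr 2
    ext i
    refine Fin.cases ?_ (fun i => ?_) i
    · simp; ring
    · simp; ring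

lemma bmEuc {n : ℕ} {K0 K1 K2 : Set (EuclideanSpace ℝ (Fin n))} (h0 : MeasurableSet K0)
    (h1 : MeasurableSet K1) (h2 : MeasurableSet K2)
    (H : ∀ x ∈ K1, ∀ y ∈ K2, (1 / 2 : ℝ) • (x + y) ∈ K0) :
    volume K1 * volume K2 ≤ volume K0 ^ 2 := by
  have mp := PiLp.volume_preserving_toLp (Fin n)
  rw [← mp.measure_preimage h0.nullMeasurableSet, ← mp.measure_preimage h1.nullMeasurableSet,
    ← mp.measure_preimage h2.nullMeasurableSet]
  have m0 := mp.measurable h0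
  have m1 := mp.measurable h1
  have m2 := mp.measurable h2
  have := plN n (measurable_one.indicator m1) (measurable_one.indicator m2)
    (measurable_one.indicator m0) (fun x y => by
      classical
      by_cases hx : x ∈ WithLp.toLp 2 ⁻¹' K1
      · by_cases hy : y ∈ WithLp.toLp 2 ⁻¹' K2
        · have : (1 / 2 : ℝ) • (x + y) ∈ WithLp.toLp 2 ⁻¹' K0 := H _ hx _ hy
          rw [Set.indicator_of_mem hx, Set.indicator_of_mem hy, Set.indicator_of_mem this]
          simp
        · rw [Set.indicator_of_notMem hy]; simp
      · rw [Set.indicator_of_notMem hx]; simp)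
  rwa [lintegral_indicator_one m0, lintegral_indicator_one m1, lintegral_indicator_one m2] at this

section PBsec
variable {n : ℕ}

def pd (i : Fin (n+1)) (F : Euc n → ℝ) (x : Euc n) : ℝ :=
  fderiv ℝ F x (EuclideanSpace.single i 1)

def Sm (F : Euc n → ℝ) : Prop := ContDiffOn ℝ (⊤ : ℕ∞) F {(0 : Euc n)}ᶜ

lemma Om_open : IsOpen ({(0 : Euc n)}ᶜ) := isOpen_compl_singleton

lemma Om_nhds {x : Euc n} (hx : x ≠ 0) : ({(0 : Euc n)}ᶜ) ∈ nhds x := Om_open.mem_nhds hx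

lemma Sm.at {F : Euc n → ℝ} (h : Sm F) {x : Euc n} (hx : x ≠ 0) :
    ContDiffAt ℝ (⊤ : ℕ∞) F x := ContDiffOn.contDiffAt h (Om_nhds hx)

lemma Sm.diff {F : Euc n → ℝ} (h : Sm F) {x : Euc n} (hx : x ≠ 0) :
    DifferentiableAt ℝ F x := (h.at hx).differentiableAt (by simp)

lemma Sm.cont {F : Euc n → ℝ} (h : Sm F) : ContinuousOn F {(0 : Euc n)}ᶜ :=
  ContDiffOn.continuousOn h

lemma Sm.pd {F : Euc n → ℝ} (h : Sm F) (i : Fin (n+1)) : Sm (pd i F) := by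
  have := ContDiffOn.fderiv_of_isOpen h Om_open (m := (⊤ : ℕ∞)) (by simp)
  exact this.clm_apply contDiffOn_const

lemma Sm.add {F G : Euc n → ℝ} (h : Sm F) (h' : Sm G) : Sm (fun x => F x + G x) :=
  ContDiffOn.add h h'
lemma Sm.sub {F G : Euc n → ℝ} (h : Sm F) (h' : Sm G) : Sm (fun x => F x - G x) :=
  ContDiffOn.sub h h'
lemma Sm.neg {F : Euc n → ℝ} (h : Sm F) : Sm (fun x => - F x) :=
  ContDiffOn.neg h
lemma Sm.mul {F G : Euc n → ℝ} (h : Sm F) (h' : Sm G) : Sm (fun x => F x * G x) :=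
  ContDiffOn.mul h h'
lemma Sm.const (c : ℝ) : Sm (fun _ : Euc n => c) := contDiffOn_const
lemma Sm.sum {ι : Type*} {s : Finset ι} {F : ι → Euc n → ℝ} (h : ∀ i ∈ s, Sm (F i)) :
    Sm (fun x => ∑ i ∈ s, F i x) := ContDiffOn.sum h
lemma Sm.prod {ι : Type*} {s : Finset ι} {F : ι → Euc n → ℝ} (h : ∀ i ∈ s, Sm (F i)) :
    Sm (fun x => ∏ i ∈ s, F i x) := contDiffOn_prod h
lemma Sm.inv {F : Euc n → ℝ} (h : Sm F) (h0 : ∀ x ≠ 0, F x ≠ 0) : Sm (fun x => (F x)⁻¹) :=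
  ContDiffOn.inv h h0
lemma Sm.div {F G : Euc n → ℝ} (h : Sm F) (h' : Sm G) (h0 : ∀ x ≠ 0, G x ≠ 0) :
    Sm (fun x => F x / G x) := ContDiffOn.div h h' h0
lemma Sm.rpow {F : Euc n → ℝ} (h : Sm F) (h0 : ∀ x ≠ 0, F x ≠ 0) (r : ℝ) :
    Sm (fun x => F x ^ r) := ContDiffOn.rpow_const_of_ne h h0
lemma Sm.norm : Sm (fun x : Euc n => ‖x‖) := fun _ hx =>
  (contDiffAt_norm ℝ hx).contDiffWithinAt
lemma Sm.coord (i : Fin (n+1)) : Sm (fun x : Euc n => x i) :=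
  (EuclideanSpace.proj (𝕜 := ℝ) i).contDiff.contDiffOn
lemma Sm.congr {F G : Euc n → ℝ} (h : Sm F) (h' : ∀ x ≠ 0, G x = F x) : Sm G :=
  ContDiffOn.congr h h'

lemma pd_congr {F G : Euc n → ℝ} (h : ∀ x ≠ 0, F x = G x) (i : Fin (n+1)) {x : Euc n}
    (hx : x ≠ 0) : pd i F x = pd i G x := by
  unfold pd
  rw [Filter.EventuallyEq.fderiv_eq]
  filter_upwards [Om_nhds hx] with y hy using h y hy

lemma pd_of {F : Euc n → ℝ} {F' : Euc n →L[ℝ] ℝ} {x : Euc n} (h : HasFDerivAt F F' x)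
    (i : Fin (n+1)) : pd i F x = F' (EuclideanSpace.single i 1) := by rw [pd, h.fderiv]

lemma pd_add {F G : Euc n → ℝ} {x : Euc n} (i : Fin (n+1)) (h : DifferentiableAt ℝ F x)
    (h' : DifferentiableAt ℝ G x) : pd i (fun y => F y + G y) x = pd i F x + pd i G x := by
  exact pd_of (h.hasFDerivAt.add h'.hasFDerivAt) i
lemma pd_sub {F G : Euc n → ℝ} {x : Euc n} (i : Fin (n+1)) (h : DifferentiableAt ℝ F x)
    (h' : DifferentiableAt ℝ G x) : pd i (fun y => F y - G y) x = pd i F x - pd i G x := by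
  exact pd_of (h.hasFDerivAt.sub h'.hasFDerivAt) i
lemma pd_mul {F G : Euc n → ℝ} {x : Euc n} (i : Fin (n+1)) (h : DifferentiableAt ℝ F x)
    (h' : DifferentiableAt ℝ G x) :
    pd i (fun y => F y * G y) x = pd i F x * G x + F x * pd i G x := by
  refine (pd_of (h.hasFDerivAt.mul h'.hasFDerivAt) i).trans ?_; simp [pd]; ring
lemma pd_const (c : ℝ) (x : Euc n) (i : Fin (n+1)) : pd i (fun _ => c) x = 0 := by
  simp [pd]
lemma pd_const_mul {F : Euc n → ℝ} {x : Euc n} (i : Fin (n+1)) (c : ℝ)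
    (h : DifferentiableAt ℝ F x) : pd i (fun y => c * F y) x = c * pd i F x := by
  rw [pd_mul i (differentiableAt_const c) h, pd_const]; ring
lemma pd_sum {ι : Type*} {s : Finset ι} {F : ι → Euc n → ℝ} {x : Euc n} (i : Fin (n+1))
    (h : ∀ j ∈ s, DifferentiableAt ℝ (F j) x) :
    pd i (fun y => ∑ j ∈ s, F j y) x = ∑ j ∈ s, pd i (F j) x := by
  rw [pd_of (HasFDerivAt.fun_sum (fun j hj => (h j hj).hasFDerivAt))]; simp [pd]
lemma pd_rpow {F : Euc n → ℝ} {x : Euc n} (i : Fin (n+1)) (r : ℝ)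
    (h : DifferentiableAt ℝ F x) (h0 : F x ≠ 0) :
    pd i (fun y => F y ^ r) x = r * F x ^ (r-1) * pd i F x := by
  rw [pd_of (h.hasFDerivAt.rpow_const (Or.inl h0))]; simp [pd]
lemma pd_inv {F : Euc n → ℝ} {x : Euc n} (i : Fin (n+1))
    (h : DifferentiableAt ℝ F x) (h0 : F x ≠ 0) :
    pd i (fun y => (F y)⁻¹) x = - pd i F x / F x ^ 2 := by
  have := (hasDerivAt_inv h0).comp_hasFDerivAt x h.hasFDerivAt
  refine (pd_of this i).trans ?_; simp [pd]; field_simp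
lemma pd_div {F G : Euc n → ℝ} {x : Euc n} (i : Fin (n+1)) (h : DifferentiableAt ℝ F x)
    (h' : DifferentiableAt ℝ G x) (h0 : G x ≠ 0) :
    pd i (fun y => F y / G y) x = (pd i F x * G x - F x * pd i G x) / G x ^ 2 := by
  simp only [div_eq_mul_inv]
  rw [pd_mul i h (h'.fun_inv h0), pd_inv i h' h0]; field_simp; ring
lemma pd_coord (i j : Fin (n+1)) (x : Euc n) :
    pd i (fun y : Euc n => y j) x = if j = i then 1 else 0 := by
  refine (pd_of (EuclideanSpace.proj (𝕜 := ℝ) j : Euc n →L[ℝ] ℝ).hasFDerivAt i).trans ?_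
  simp [Pi.single_apply]
lemma pd_normsq (i : Fin (n+1)) (x : Euc n) :
    pd i (fun y : Euc n => ‖y‖^2) x = 2 * x i := by
  rw [pd, fderiv_norm_sq_apply]; simp [EuclideanSpace.inner_single_right]
lemma pd_norm (i : Fin (n+1)) {x : Euc n} (hx : x ≠ 0) :
    pd i (fun y : Euc n => ‖y‖) x = x i / ‖x‖ := by
  have h := pd_normsq i x
  have e : (fun y : Euc n => ‖y‖^2) = fun y => ‖y‖ * ‖y‖ := by ext y; ring
  rw [e, pd_mul i (Sm.norm.diff hx) (Sm.norm.diff hx)] at h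
  have : ‖x‖ ≠ 0 := norm_ne_zero_iff.2 hx
  field_simp; linarith

lemma fd_eq (F : Euc n → ℝ) (x v : Euc n) : fderiv ℝ F x v = ∑ i, v i * pd i F x := by
  have hv : v = ∑ i, v i • (EuclideanSpace.single i (1:ℝ) : Euc n) := by
    ext j; simp [Pi.single_apply]
  conv_lhs => rw [hv]
  simp [pd]

lemma pd_comm {F : Euc n → ℝ} (h : Sm F) (i j : Fin (n+1)) {x : Euc n} (hx : x ≠ 0) :
    pd i (pd j F) x = pd j (pd i F) x := by
  have hs := (h.at hx).isSymmSndFDerivAt (by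
    rw [minSmoothness_of_isRCLikeNormedField]; exact WithTop.coe_le_coe.2 le_top)
  have hd : DifferentiableAt ℝ (fderiv ℝ F) x := by
    have := ContDiffOn.fderiv_of_isOpen h Om_open (m := (⊤ : ℕ∞)) (by simp)
    exact (this.contDiffAt (Om_nhds hx)).differentiableAt (by simp)
  have k : ∀ a b : Fin (n+1), pd a (pd b F) x
      = fderiv ℝ (fderiv ℝ F) x (EuclideanSpace.single a 1) (EuclideanSpace.single b 1) := by
    intro a b
    have := hd.hasFDerivAt.clm_apply (hasFDerivAt_const (EuclideanSpace.single b (1:ℝ) : Euc n) x)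
    have e : pd b F = fun y => fderiv ℝ F y (EuclideanSpace.single b 1) := rfl
    rw [e, pd_of this]; simp
  rw [k, k]; exact hs.eq _ _

/-- homogeneity off the origin -/
def Hom (d : ℤ) (F : Euc n → ℝ) : Prop := ∀ c : ℝ, 0 < c → ∀ x : Euc n, x ≠ 0 → F (c • x) = c ^ d * F x

lemma Hom.pd {d : ℤ} {F : Euc n → ℝ} (h : Hom d F) (i : Fin (n+1)) : Hom (d-1) (pd i F) := by
  intro c hc x hx
  have h1 : fderiv ℝ (fun y => F (c • y)) x = fderiv ℝ (fun y => c^d * F y) x := by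
    apply Filter.EventuallyEq.fderiv_eq
    filter_upwards [Om_nhds hx] with y hy using h c hc y hy
  have h2 : fderiv ℝ (fun y => c^d * F y) x = c^d • fderiv ℝ F x := by
    have : c^d ≠ 0 := (zpow_pos hc d).ne'
    rw [show (fun y => c^d * F y) = (c^d) • F from rfl, fderiv_const_smul_field]; rfl
  rw [fderiv_comp_smul, h2] at h1
  have := congrArg (fun L => L (EuclideanSpace.single i (1:ℝ))) h1
  simp only [_root_.smul_apply, smul_eq_mul] at this
  unfold _root_.pd
  rw [zpow_sub_one₀ hc.ne']
  field_simp; linarith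
lemma Hom.mul {d e : ℤ} {F G : Euc n → ℝ} (h : Hom d F) (h' : Hom e G) :
    Hom (d+e) (fun x => F x * G x) := by
  intro c hc x hx
  simp only [h c hc x hx, h' c hc x hx, zpow_add₀ hc.ne']; ring
lemma Hom.norm : Hom 1 (fun x : Euc n => ‖x‖) := by
  intro c hc x hx; simp [norm_smul, abs_of_pos hc]

lemma Hom.euler {d : ℤ} {F : Euc n → ℝ} (h : Hom d F) (hs : Sm F) {x : Euc n} (hx : x ≠ 0) :
    ∑ i, x i * _root_.pd i F x = d * F x := by
  rw [← fd_eq]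
  have h1 : HasDerivAt (fun t : ℝ => F (t • x)) (fderiv ℝ F x x) 1 := by
    have e : HasDerivAt (fun t : ℝ => t • x) x 1 := by
      simpa using (hasDerivAt_id (1:ℝ)).smul_const x
    have := (hs.diff hx).hasFDerivAt
    have h2 : HasFDerivAt F (fderiv ℝ F x) ((1:ℝ) • x) := by simpa using this
    exact h2.comp_hasDerivAt 1 e
  have h2 : HasDerivAt (fun t : ℝ => t^d * F x) (d * F x) 1 := by
    simpa using (hasDerivAt_zpow d 1 (by simp)).mul_const (F x)
  refine h1.unique (h2.congr_of_eventuallyEq ?_)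
  filter_upwards [lt_mem_nhds (show (0:ℝ) < 1 by norm_num)] with t ht using h t ht x hx

end PBsec

section PCsec
variable {n : ℕ}

def bet : ContDiffBump (2:ℝ) := ⟨1/2, 1, by norm_num, by norm_num⟩

def eta (x : Euc n) : ℝ := bet (‖x‖^2)

lemma eta_smooth : ContDiff ℝ (⊤ : ℕ∞) (eta : Euc n → ℝ) :=
  bet.contDiff.comp (contDiff_norm_sq ℝ)

lemma eta_nonneg (x : Euc n) : 0 ≤ eta x := bet.nonneg

lemma eta_supp {x : Euc n} (h : eta x ≠ 0) : 1 < ‖x‖^2 ∧ ‖x‖^2 < 3 := by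
  have : ‖x‖^2 ∈ Function.support (bet : ℝ → ℝ) := h
  rw [ContDiffBump.support_eq, Metric.mem_ball, Real.dist_eq, abs_lt] at this
  have e : bet.rOut = 1 := rfl
  rw [e] at this
  constructor <;> linarith [this.1, this.2]

lemma eta_pos {x : Euc n} (h1 : 1 < ‖x‖^2) (h2 : ‖x‖^2 < 3) : 0 < eta x := by
  apply bet.pos_of_mem_ball
  have e : bet.rOut = 1 := rfl
  rw [e, Metric.mem_ball, Real.dist_eq, abs_lt]
  constructor <;> linarith

/-- The closed annulus. -/
def Ann (n : ℕ) : Set (Euc n) := {x | 1 ≤ ‖x‖ ∧ ‖x‖ ≤ 2}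

lemma Ann_compact : IsCompact (Ann n) := by
  apply Metric.isCompact_of_isClosed_isBounded
  · exact (isClosed_le continuous_const continuous_norm).inter
      (isClosed_le continuous_norm continuous_const)
  · apply (Metric.isBounded_closedBall (x := (0 : Euc n)) (r := 2)).subset
    intro x hx; simpa using hx.2

lemma Ann_sub : Ann n ⊆ {(0 : Euc n)}ᶜ := by
  rintro x ⟨h1, _⟩ rfl; simp at h1; linarith

lemma eta_Ann {x : Euc n} (h : eta x ≠ 0) : x ∈ Ann n := by
  obtain ⟨h1, h2⟩ := eta_supp h
  have := norm_nonneg x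
  constructor <;> nlinarith

lemma eta_Ann' {x : Euc n} (h : x ∉ Ann n) : eta x = 0 := by
  by_contra h'; exact h (eta_Ann h')

lemma eta_hcs (F : Euc n → ℝ) : HasCompactSupport (fun x => eta x * F x) :=
  HasCompactSupport.intro Ann_compact (fun x hx => by simp [eta_Ann' hx])

lemma eta_near0 : ∀ᶠ y in nhds (0 : Euc n), eta y = 0 := by
  have : Metric.ball (0 : Euc n) 1 ∈ nhds 0 := Metric.ball_mem_nhds _ one_pos
  filter_upwards [this] with y hy
  by_contra h
  have := (eta_Ann h).1
  simp at hy; linarith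

lemma eta_zero : eta (0 : Euc n) = 0 := eta_near0.self_of_nhds

lemma eta_cont {F : Euc n → ℝ} (h : ContinuousOn F {(0 : Euc n)}ᶜ) :
    Continuous (fun x => eta x * F x) := by
  rw [continuous_iff_continuousAt]
  intro x
  by_cases hx : x = 0
  · subst hx
    have : (fun x : Euc n => eta x * F x) =ᶠ[nhds 0] fun _ => 0 := by
      filter_upwards [eta_near0] with y hy; simp [hy]
    exact continuousAt_const.congr this.symm
  · exact eta_smooth.continuous.continuousAt.mul (h.continuousAt (Om_nhds hx))

lemma eta_int {F : Euc n → ℝ} (h : ContinuousOn F {(0 : Euc n)}ᶜ) :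
    Integrable (fun x => eta x * F x) :=
  (eta_cont h).integrable_of_hasCompactSupport (eta_hcs F)

lemma eta_cd {F : Euc n → ℝ} (h : Sm F) : ContDiff ℝ (⊤ : ℕ∞) (fun x => eta x * F x) := by
  rw [contDiff_iff_contDiffAt]
  intro x
  by_cases hx : x = 0
  · subst hx
    have : (fun x : Euc n => eta x * F x) =ᶠ[nhds 0] fun _ => 0 := by
      filter_upwards [eta_near0] with y hy; simp [hy]
    exact contDiffAt_const.congr_of_eventuallyEq this
  · exact eta_smooth.contDiffAt.mul (h.at hx)

def EE (F : Euc n → ℝ) : ℝ := ∫ x, eta x * F x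

lemma EE_congr {F G : Euc n → ℝ} (h : ∀ x ≠ 0, F x = G x) : EE F = EE G := by
  unfold EE; congr 1; ext x
  by_cases hx : x = 0
  · subst hx; simp [eta_zero]
  · rw [h x hx]

lemma EE_add {F G : Euc n → ℝ} (h : ContinuousOn F {(0 : Euc n)}ᶜ)
    (h' : ContinuousOn G {(0 : Euc n)}ᶜ) : EE (fun x => F x + G x) = EE F + EE G := by
  unfold EE; rw [← integral_add (eta_int h) (eta_int h')]; congr 1; ext x; ring
lemma EE_sub {F G : Euc n → ℝ} (h : ContinuousOn F {(0 : Euc n)}ᶜ)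
    (h' : ContinuousOn G {(0 : Euc n)}ᶜ) : EE (fun x => F x - G x) = EE F - EE G := by
  unfold EE; rw [← integral_sub (eta_int h) (eta_int h')]; congr 1; ext x; ring
lemma EE_const_mul (c : ℝ) (F : Euc n → ℝ) : EE (fun x => c * F x) = c * EE F := by
  unfold EE; rw [← integral_const_mul]; congr 1; ext x; ring
lemma EE_sum {ι : Type*} {s : Finset ι} {F : ι → Euc n → ℝ}
    (h : ∀ i ∈ s, ContinuousOn (F i) {(0 : Euc n)}ᶜ) :
    EE (fun x => ∑ i ∈ s, F i x) = ∑ i ∈ s, EE (F i) := by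
  unfold EE; rw [← integral_finsetSum _ (fun i hi => eta_int (h i hi))]
  congr 1; ext x; rw [Finset.mul_sum]
lemma EE_nonneg {F : Euc n → ℝ} (h : ∀ x ≠ 0, 0 ≤ F x) : 0 ≤ EE F := by
  apply integral_nonneg; intro x
  by_cases hx : x = 0
  · subst hx; simp [eta_zero]
  · exact mul_nonneg (eta_nonneg x) (h x hx)
lemma EE_mono {F G : Euc n → ℝ} (hF : ContinuousOn F {(0 : Euc n)}ᶜ)
    (hG : ContinuousOn G {(0 : Euc n)}ᶜ) (h : ∀ x ≠ 0, F x ≤ G x) : EE F ≤ EE G := by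
  have := EE_nonneg (F := fun x => G x - F x) (fun x hx => sub_nonneg.2 (h x hx))
  rw [EE_sub hG hF] at this; linarith
lemma EE_zero_imp {F : Euc n → ℝ} (hF : ContinuousOn F {(0 : Euc n)}ᶜ) (h : ∀ x ≠ 0, 0 ≤ F x)
    (h0 : EE F ≤ 0) {x : Euc n} (h1 : 1 < ‖x‖^2) (h2 : ‖x‖^2 < 3) : F x = 0 := by
  have e : EE F = 0 := le_antisymm h0 (EE_nonneg h)
  have nn : 0 ≤ fun x : Euc n => eta x * F x := by
    intro x
    by_cases hx : x = 0
    · subst hx; simp [eta_zero]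
    · exact mul_nonneg (eta_nonneg x) (h x hx)
  have := (Continuous.integral_pos_of_hasCompactSupport_nonneg_nonzero
    (μ := volume) (eta_cont hF) (eta_hcs F) nn (x := x))
  by_contra hne
  have h3 := this (mul_ne_zero (eta_pos h1 h2).ne' hne)
  unfold EE at e; linarith

lemma EE_pos {F : Euc n → ℝ} (hF : ContinuousOn F {(0 : Euc n)}ᶜ) (h : ∀ x ≠ 0, 0 < F x) :
    0 < EE F := by
  by_contra hc
  set x : Euc n := EuclideanSpace.single 0 (Real.sqrt 2) with hx
  have hn : ‖x‖^2 = 2 := by simp [hx]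
  have hx0 : x ≠ 0 := by intro h; rw [h] at hn; simp at hn
  have := EE_zero_imp hF (fun x hx => (h x hx).le) (not_lt.1 hc) (x := x)
    (by rw [hn]; norm_num) (by rw [hn]; norm_num)
  exact (h x hx0).ne' this

lemma int_pd_eta {F : Euc n → ℝ} (h : Sm F) (i : Fin (n+1)) :
    Integrable (pd i (fun y => eta y * F y)) := by
  have hcd := eta_cd h
  apply Continuous.integrable_of_hasCompactSupport
  · exact (hcd.continuous_fderiv (by simp)).clm_apply continuous_const
  · have := (eta_hcs F).fderiv (𝕜 := ℝ)
    exact this.comp_left (g := fun L : Euc n →L[ℝ] ℝ => L (EuclideanSpace.single i 1)) (by simp)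

lemma int_pd_zero {F : Euc n → ℝ} (h : Sm F) (i : Fin (n+1)) :
    ∫ x, pd i (fun y => eta y * F y) x = 0 := by
  have hcd := eta_cd h
  have hint := int_pd_eta h i
  have hint0 := eta_int h.cont
  have := integral_mul_fderiv_eq_neg_fderiv_mul_of_integrable (μ := (volume : Measure (Euc n)))
    (f := fun y : Euc n => eta y * F y) (g := fun _ => (1:ℝ)) (v := EuclideanSpace.single i 1)
    (by simp only [mul_one]; exact hint) (by simp) (by simpa using hint0)
    (fun x _ => hcd.contDiffAt.differentiableAt (by simp)) (fun x _ => differentiableAt_const _)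
  simp only [fderiv_fun_const, Pi.zero_apply, _root_.zero_apply, mul_zero, integral_zero, mul_one] at this
  unfold pd; linarith

lemma pd_eta (i : Fin (n+1)) (x : Euc n) : pd i eta x = deriv bet (‖x‖^2) * (2 * x i) := by
  have h1 : HasDerivAt (bet : ℝ → ℝ) (deriv bet (‖x‖^2)) (‖x‖^2) :=
    ((bet.contDiff (n := 1)).differentiable (by simp) _).hasDerivAt
  have h2 : DifferentiableAt ℝ (fun y : Euc n => ‖y‖^2) x :=
    (contDiff_norm_sq ℝ (n := 1)).differentiable (by simp) x
  have := h1.comp_hasFDerivAt x h2.hasFDerivAt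
  refine (pd_of this i).trans ?_
  simp only [_root_.smul_apply, smul_eq_mul]
  rw [← pd, pd_normsq]

lemma EE_div {Y : Fin (n+1) → Euc n → ℝ} (hY : ∀ i, Sm (Y i))
    (ht : ∀ x ≠ 0, ∑ i, x i * Y i x = 0) : EE (fun x => ∑ i, pd i (Y i) x) = 0 := by
  have h1 : ∫ x, ∑ i, pd i (fun y => eta y * Y i y) x = 0 := by
    rw [integral_finsetSum _ (fun i _ => int_pd_eta (hY i) i)]
    simp [int_pd_zero (hY _)]
  rw [← h1]; unfold EE; congr 1; ext x
  by_cases hx : x = 0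
  · subst hx
    rw [eta_zero, zero_mul]; symm
    apply Finset.sum_eq_zero; intro i _
    have : (fun x : Euc n => eta x * Y i x) =ᶠ[nhds 0] fun _ => 0 := by
      filter_upwards [eta_near0] with y hy; simp [hy]
    rw [pd, this.fderiv_eq]; simp
  · have : ∀ i, pd i (fun y => eta y * Y i y) x
        = deriv bet (‖x‖^2) * 2 * (x i * Y i x) + eta x * pd i (Y i) x := by
      intro i
      rw [pd_mul i (eta_smooth.contDiffAt.differentiableAt (by simp)) ((hY i).diff hx), pd_eta]
      ring
    simp only [this, Finset.sum_add_distrib, ← Finset.mul_sum, ht x hx]; ring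

end PCsec

section PDsec
variable {n : ℕ}

lemma det_updateCol_adj {ι : Type*} [Fintype ι] [DecidableEq ι] (A : Matrix ι ι ℝ) (k : ι)
    (b : ι → ℝ) : (A.updateCol k b).det = ∑ i, A.adjugate k i * b i := by
  rw [← Matrix.cramer_apply, Matrix.cramer_eq_adjugate_mulVec]; rfl

lemma det_updateRow_adj {ι : Type*} [Fintype ι] [DecidableEq ι] (A : Matrix ι ι ℝ) (k : ι)
    (b : ι → ℝ) : (A.updateRow k b).det = ∑ i, A.adjugate i k * b i := by
  rw [← Matrix.cramer_transpose_apply, Matrix.cramer_eq_adjugate_mulVec,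
    ← Matrix.adjugate_transpose]; rfl

lemma det_hasFDeriv {E : Type*} [NormedAddCommGroup E] [NormedSpace ℝ E] {ι : Type*} [Fintype ι]
    [DecidableEq ι] {A : E → Matrix ι ι ℝ} {A' : ι → ι → E →L[ℝ] ℝ} {x : E}
    (h : ∀ i j, HasFDerivAt (fun y => A y i j) (A' i j) x) :
    HasFDerivAt (fun y => (A y).det) (∑ k, ∑ i, (A x).adjugate k i • A' i k) x := by
  have h1 : HasFDerivAt (fun y => ∑ σ : Equiv.Perm ι, ((Equiv.Perm.sign σ : ℤ) : ℝ) *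
      ∏ i, A y (σ i) i) (∑ σ : Equiv.Perm ι, ((Equiv.Perm.sign σ : ℤ) : ℝ) •
      ∑ k, (∏ j ∈ Finset.univ.erase k, A x (σ j) j) • A' (σ k) k) x := by
    apply HasFDerivAt.fun_sum
    intro σ _
    exact (HasFDerivAt.finsetProd (fun i _ => h (σ i) i)).const_mul _
  simp only [Matrix.det_apply']
  convert h1 using 1
  ext v
  have h2 : ∀ k, ∑ i, (A x).adjugate k i * A' i k v = ∑ σ : Equiv.Perm ι,
      ((Equiv.Perm.sign σ : ℤ) : ℝ) * ((∏ j ∈ Finset.univ.erase k, A x (σ j) j) * A' (σ k) k v) := by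
    intro k
    rw [← det_updateCol_adj (A x) k (fun i => A' i k v), Matrix.det_apply']
    refine Finset.sum_congr rfl fun σ _ => ?_
    congr 1
    rw [← Finset.mul_prod_erase Finset.univ _ (Finset.mem_univ k), mul_comm]
    congr 1
    · refine Finset.prod_congr rfl fun j hj => ?_
      rw [Matrix.updateCol_ne (Finset.ne_of_mem_erase hj)]
    · rw [Matrix.updateCol_self]
  simp only [_root_.sum_apply, _root_.smul_apply, smul_eq_mul, h2]
  rw [Finset.sum_comm]
  simp only [Finset.mul_sum]

lemma pd_det {A : Euc n → Matrix (Fin (n+1)) (Fin (n+1)) ℝ} {x : Euc n}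
    (h : ∀ i j, DifferentiableAt ℝ (fun y => A y i j) x) (l : Fin (n+1)) :
    pd l (fun y => (A y).det) x = ∑ k, ∑ i, (A x).adjugate k i * pd l (fun y => A y i k) x := by
  rw [pd_of (det_hasFDeriv (fun i j => (h i j).hasFDerivAt))]
  simp [pd]

lemma Sm_det {A : Euc n → Matrix (Fin (n+1)) (Fin (n+1)) ℝ} (h : ∀ i j, Sm (fun y => A y i j)) :
    Sm (fun y => (A y).det) := by
  simp only [Matrix.det_apply']
  exact Sm.sum fun σ _ => (Sm.const _).mul (Sm.prod fun i _ => h _ _)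

lemma Sm_adj {A : Euc n → Matrix (Fin (n+1)) (Fin (n+1)) ℝ} (h : ∀ i j, Sm (fun y => A y i j))
    (k l : Fin (n+1)) : Sm (fun y => (A y).adjugate k l) := by
  simp only [Matrix.adjugate_apply]
  apply Sm_det
  intro i j
  by_cases hi : i = l
  · subst hi; simp only [Matrix.updateRow_self]; exact Sm.const _
  · simp only [Matrix.updateRow_ne hi]; exact h i j

lemma det_swap_rows {m : ℕ} (A : Matrix (Fin m) (Fin m) ℝ) {i k : Fin m} (hik : k ≠ i)
    (u v : Fin m → ℝ) : ((A.updateRow i u).updateRow k v).det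
      = - ((A.updateRow i v).updateRow k u).det := by
  have e : (A.updateRow i v).updateRow k u
      = ((A.updateRow i u).updateRow k v).submatrix (Equiv.swap i k) id := by
    ext a b
    simp only [Matrix.submatrix_apply, id]
    by_cases hk : a = k
    · subst hk; simp [Matrix.updateRow_self, Matrix.updateRow_ne hik.symm]
    · by_cases hi : a = i
      · subst hi; simp [Matrix.updateRow_self, Matrix.updateRow_ne hik.symm]
      · rw [Equiv.swap_apply_of_ne_of_ne hi hk]
        simp [Matrix.updateRow_ne hk, Matrix.updateRow_ne hi]
  rw [e, Matrix.det_permute, Equiv.Perm.sign_swap hik.symm]; simp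

lemma piola {T : Fin (n+1) → Euc n → ℝ} (hT : ∀ i, Sm (T i)) (i : Fin (n+1)) {x : Euc n}
    (hx : x ≠ 0) :
    ∑ j, pd j (fun y => (Matrix.of fun k l => pd l (T k) y :
      Matrix (Fin (n+1)) (Fin (n+1)) ℝ).adjugate j i) x = 0 := by
  set A : Euc n → Matrix (Fin (n+1)) (Fin (n+1)) ℝ := fun y => Matrix.of fun k l => pd l (T k) y
    with hA
  have hAs : ∀ k l, Sm (fun y => A y k l) := fun k l => (hT k).pd l
  have hB : ∀ j a b, Sm (fun y => ((A y).updateRow i (Pi.single j 1)) a b) := by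
    intro j a b
    by_cases ha : a = i
    · subst ha; simp only [Matrix.updateRow_self]; exact Sm.const _
    · simp only [Matrix.updateRow_ne ha]; exact hAs a b
  have h1 : ∀ j, pd j (fun y => (A y).adjugate j i) x = ∑ k ∈ Finset.univ.erase i, ∑ l,
      (((A x).updateRow i (Pi.single j 1)).updateRow k (Pi.single l 1)).det
        * pd j (pd l (T k)) x := by
    intro j
    simp only [Matrix.adjugate_apply]
    rw [pd_det (fun a b => (hB j a b).diff hx), Finset.sum_comm,
      ← Finset.add_sum_erase Finset.univ _ (Finset.mem_univ i)]
    have z : ∀ b, pd j (fun y => ((A y).updateRow i (Pi.single j 1)) i b) x = 0 := by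
      intro b; simp only [Matrix.updateRow_self]; exact pd_const _ _ _
    simp only [z, mul_zero, Finset.sum_const_zero, zero_add]
    refine Finset.sum_congr rfl fun k hk => Finset.sum_congr rfl fun l _ => ?_
    have hk' := Finset.ne_of_mem_erase hk
    rw [← Matrix.adjugate_apply]
    simp only [Matrix.updateRow_ne hk']
    rfl
  change ∑ j, pd j (fun y => (A y).adjugate j i) x = 0
  simp only [h1]
  rw [Finset.sum_comm]
  apply Finset.sum_eq_zero
  intro k hk
  have hk' := Finset.ne_of_mem_erase hk
  have : ∑ j, ∑ l, (((A x).updateRow i (Pi.single j 1)).updateRow k (Pi.single l 1)).det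
        * pd j (pd l (T k)) x = - ∑ j, ∑ l,
        (((A x).updateRow i (Pi.single j 1)).updateRow k (Pi.single l 1)).det
        * pd j (pd l (T k)) x := by
    conv_lhs => rw [Finset.sum_comm]
    rw [← Finset.sum_neg_distrib]
    refine Finset.sum_congr rfl fun j _ => ?_
    rw [← Finset.sum_neg_distrib]
    refine Finset.sum_congr rfl fun l _ => ?_
    rw [det_swap_rows _ hk', pd_comm (hT k) l j hx]; ring
  linarith

def Mt (H : Euc n → ℝ) (x : Euc n) : Matrix (Fin (n+1)) (Fin (n+1)) ℝ :=
  Matrix.of fun i j => pd j (fun y => ‖y‖ * pd i H y) x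

def DD (H : Euc n → ℝ) (x : Euc n) : ℝ := (Mt H x).det

lemma Sm_T {H : Euc n → ℝ} (hs : Sm H) (i : Fin (n+1)) : Sm (fun y => ‖y‖ * pd i H y) :=
  Sm.norm.mul (hs.pd i)
lemma Sm_Mt {H : Euc n → ℝ} (hs : Sm H) (i j : Fin (n+1)) : Sm (fun y => Mt H y i j) :=
  (Sm_T hs i).pd j
lemma Sm_DD {H : Euc n → ℝ} (hs : Sm H) : Sm (DD H) := Sm_det (Sm_Mt hs)

lemma Mt_eq {H : Euc n → ℝ} (hs : Sm H) {x : Euc n} (hx : x ≠ 0) (i j : Fin (n+1)) :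
    Mt H x i j = ‖x‖ * pd j (pd i H) x + pd i H x * x j / ‖x‖ := by
  simp only [Mt, Matrix.of_apply]
  rw [pd_mul j (Sm.norm.diff hx) ((hs.pd i).diff hx), pd_norm j hx]; ring

lemma Hom_T {H : Euc n → ℝ} (hh : Hom 1 H) (i : Fin (n+1)) : Hom 1 (fun y => ‖y‖ * pd i H y) := by
  have := Hom.norm.mul (hh.pd i); simpa using this

lemma Mt_x {H : Euc n → ℝ} (hs : Sm H) (hh : Hom 1 H) {x : Euc n} (hx : x ≠ 0) (i : Fin (n+1)) :
    ∑ j, Mt H x i j * x j = ‖x‖ * pd i H x := by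
  have := (Hom_T hh i).euler (Sm_T hs i) hx
  simp only [Int.cast_one, one_mul] at this
  rw [← this]; exact Finset.sum_congr rfl fun j _ => mul_comm _ _

lemma hess_x {H : Euc n → ℝ} (hs : Sm H) (hh : Hom 1 H) {x : Euc n} (hx : x ≠ 0) (j : Fin (n+1)) :
    ∑ i, x i * pd i (pd j H) x = 0 := by
  have := (hh.pd j).euler (hs.pd j) hx; simpa using this

lemma x_Mt {H : Euc n → ℝ} (hs : Sm H) (hh : Hom 1 H) {x : Euc n} (hx : x ≠ 0) (j : Fin (n+1)) :
    ∑ i, x i * Mt H x i j = H x / ‖x‖ * x j := by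
  have h1 := hess_x hs hh hx j
  have h2 := hh.euler hs hx
  simp only [Int.cast_one, one_mul] at h2
  have : ∀ i, x i * Mt H x i j = ‖x‖ * (x i * pd i (pd j H) x) + x j / ‖x‖ * (x i * pd i H x) := by
    intro i; rw [Mt_eq hs hx, pd_comm hs j i hx]; ring
  simp only [this, Finset.sum_add_distrib, ← Finset.mul_sum, h1, h2]; ring

lemma adj_T {H : Euc n → ℝ} (hs : Sm H) (hh : Hom 1 H) {x : Euc n} (hx : x ≠ 0) (j : Fin (n+1)) :
    ∑ i, (Mt H x).adjugate j i * (‖x‖ * pd i H x) = DD H x * x j := by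
  have : (Mt H x).adjugate.mulVec ((Mt H x).mulVec (x : Fin (n+1) → ℝ)) = DD H x • (x : Fin (n+1) → ℝ) := by
    rw [Matrix.mulVec_mulVec, Matrix.adjugate_mul, Matrix.smul_mulVec, Matrix.one_mulVec]; rfl
  have h2 := congrFun this j
  simp only [Pi.smul_apply, smul_eq_mul] at h2
  rw [← h2]
  simp only [Matrix.mulVec, dotProduct, Mt_x hs hh hx]

lemma x_adj {H : Euc n → ℝ} (hs : Sm H) (hh : Hom 1 H) {x : Euc n} (hx : x ≠ 0) (i : Fin (n+1)) :
    H x / ‖x‖ * ∑ j, x j * (Mt H x).adjugate j i = DD H x * x i := by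
  have : ((x : Fin (n+1) → ℝ) ᵥ* (Mt H x)) ᵥ* (Mt H x).adjugate  = DD H x • (x : Fin (n+1) → ℝ) := by
    rw [Matrix.vecMul_vecMul, Matrix.mul_adjugate, Matrix.vecMul_smul, Matrix.vecMul_one]; rfl
  have h2 := congrFun this i
  simp only [Pi.smul_apply, smul_eq_mul] at h2
  rw [← h2]
  simp only [Matrix.vecMul, dotProduct, x_Mt hs hh hx]
  rw [Finset.mul_sum]; exact Finset.sum_congr rfl fun j _ => by ring

lemma adj_div {H : Euc n → ℝ} (hs : Sm H) {a : Fin (n+1) → Euc n → ℝ} (ha : ∀ i, Sm (a i))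
    {x : Euc n} (hx : x ≠ 0) :
    ∑ j, pd j (fun y => ∑ i, (Mt H y).adjugate j i * a i y) x
      = ∑ i, ∑ j, (Mt H x).adjugate j i * pd j (a i) x := by
  have h1 : ∀ j, pd j (fun y => ∑ i, (Mt H y).adjugate j i * a i y) x
      = ∑ i, (pd j (fun y => (Mt H y).adjugate j i) x * a i x
        + (Mt H x).adjugate j i * pd j (a i) x) := by
    intro j
    rw [pd_sum j (fun i _ => ((Sm_adj (Sm_Mt hs) j i).mul (ha i)).diff hx)]
    exact Finset.sum_congr rfl fun i _ => pd_mul j ((Sm_adj (Sm_Mt hs) j i).diff hx) ((ha i).diff hx)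
  simp only [h1]
  rw [Finset.sum_comm]
  refine Finset.sum_congr rfl fun i _ => ?_
  rw [Finset.sum_add_distrib, ← Finset.sum_mul]
  have := piola (T := fun i y => ‖y‖ * pd i H y) (Sm_T hs) i hx
  change ∑ j, pd j (fun y => (Mt H y).adjugate j i) x = 0 at this
  rw [this]; ring

def Yv (H f : Euc n → ℝ) (j : Fin (n+1)) (x : Euc n) : ℝ :=
  ∑ i, (Mt H x).adjugate j i * (‖x‖ * H x * pd i f x)

lemma Sm_Yv {H f : Euc n → ℝ} (hs : Sm H) (hf : Sm f) (j : Fin (n+1)) : Sm (Yv H f j) :=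
  Sm.sum fun i _ => (Sm_adj (Sm_Mt hs) j i).mul ((Sm.norm.mul hs).mul (hf.pd i))

lemma Yv_tan {H f : Euc n → ℝ} (hs : Sm H) (hh : Hom 1 H) (h0 : ∀ x ≠ 0, H x ≠ 0)
    (hf : Sm f) (hf0 : Hom 0 f) {x : Euc n} (hx : x ≠ 0) : ∑ j, x j * Yv H f j x = 0 := by
  have h1 := hf0.euler hf hx
  simp only [Int.cast_zero, zero_mul] at h1
  have hn : ‖x‖ ≠ 0 := norm_ne_zero_iff.2 hx
  have hc : H x / ‖x‖ ≠ 0 := div_ne_zero (h0 x hx) hn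
  have : H x / ‖x‖ * ∑ j, x j * Yv H f j x = 0 := by
    have e : ∑ j, x j * Yv H f j x
        = ∑ i, (∑ j, x j * (Mt H x).adjugate j i) * (‖x‖ * H x * pd i f x) := by
      simp only [Yv, Finset.mul_sum, Finset.sum_mul]
      rw [Finset.sum_comm]
      exact Finset.sum_congr rfl fun i _ => Finset.sum_congr rfl fun j _ => by ring
    rw [e, Finset.mul_sum]
    have : ∀ i, H x / ‖x‖ * ((∑ j, x j * (Mt H x).adjugate j i) * (‖x‖ * H x * pd i f x))
        = DD H x * ‖x‖ * H x * (x i * pd i f x) := by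
      intro i; rw [← mul_assoc, x_adj hs hh hx]; ring
    simp only [this, ← Finset.mul_sum, h1, mul_zero]
  exact (mul_eq_zero.1 this).resolve_left hc

lemma Yv_div {H f : Euc n → ℝ} (hs : Sm H) (hh : Hom 1 H)
    (hf : Sm f) (hf0 : Hom 0 f) {x : Euc n} (hx : x ≠ 0) : ∑ j, pd j (Yv H f j) x
      = ((Mt H x).adjugate * Mt (fun y => f y * H y) x).trace - (n+1) * (f x * DD H x) := by
  have h1 := hf0.euler hf hx
  simp only [Int.cast_zero, zero_mul] at h1
  have e0 := adj_div hs (a := fun i y => ‖y‖ * H y * pd i f y)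
    (fun i => (Sm.norm.mul hs).mul (hf.pd i)) hx
  change ∑ j, pd j (Yv H f j) x = _ at e0
  rw [e0]
  have e1 : ∀ i j, pd j (fun y => ‖y‖ * H y * pd i f y) x
      = Mt (fun y => f y * H y) x i j - f x * Mt H x i j - pd j f x * (‖x‖ * pd i H x) := by
    intro i j
    have : ∀ y ≠ 0, ‖y‖ * H y * pd i f y
        = ‖y‖ * pd i (fun y => f y * H y) y - f y * (‖y‖ * pd i H y) := by
      intro y hy
      rw [pd_mul i (hf.diff hy) (hs.diff hy)]; ring
    rw [pd_congr this j hx, pd_sub j ((Sm_T (hf.mul hs) i).diff hx)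
      ((hf.mul (Sm_T hs i)).diff hx), pd_mul j (hf.diff hx) ((Sm_T hs i).diff hx)]
    simp only [Mt, Matrix.of_apply]; ring
  simp only [e1]
  have e2 : ∑ i, ∑ j, (Mt H x).adjugate j i * Mt (fun y => f y * H y) x i j
      = ((Mt H x).adjugate * Mt (fun y => f y * H y) x).trace := by
    rw [Finset.sum_comm]; rfl
  have e3 : ∑ i, ∑ j, (Mt H x).adjugate j i * Mt H x i j = (n+1) * DD H x := by
    rw [Finset.sum_comm]
    change ((Mt H x).adjugate * Mt H x).trace = _
    rw [Matrix.adjugate_mul, Matrix.trace_smul, Matrix.trace_one]; simp [DD]; ring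
  have e4 : ∑ i, ∑ j, (Mt H x).adjugate j i * (pd j f x * (‖x‖ * pd i H x)) = 0 := by
    rw [Finset.sum_comm]
    have : ∀ j, ∑ i, (Mt H x).adjugate j i * (pd j f x * (‖x‖ * pd i H x))
        = DD H x * (x j * pd j f x) := by
      intro j
      rw [← mul_assoc, ← adj_T hs hh hx j, Finset.sum_mul]
      exact Finset.sum_congr rfl fun i _ => by ring
    simp only [this, ← Finset.mul_sum, h1, mul_zero]
  have : ∀ i j, (Mt H x).adjugate j i * (Mt (fun y => f y * H y) x i j - f x * Mt H x i j
      - pd j f x * (‖x‖ * pd i H x)) = (Mt H x).adjugate j i * Mt (fun y => f y * H y) x i j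
      - f x * ((Mt H x).adjugate j i * Mt H x i j)
      - (Mt H x).adjugate j i * (pd j f x * (‖x‖ * pd i H x)) := by intros; ring
  simp only [this, Finset.sum_sub_distrib, ← Finset.mul_sum, e2, e3, e4]; ring

lemma Sm_tr {H f : Euc n → ℝ} (hs : Sm H) (hf : Sm f) :
    Sm (fun x => ((Mt H x).adjugate * Mt f x).trace) := by
  simp only [Matrix.trace, Matrix.diag_apply, Matrix.mul_apply]
  exact Sm.sum fun j _ => Sm.sum fun i _ => (Sm_adj (Sm_Mt hs) j i).mul (Sm_Mt hf i j)

lemma EE_first {H f : Euc n → ℝ} (hs : Sm H) (hh : Hom 1 H) (h0 : ∀ x ≠ 0, H x ≠ 0)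
    (hf : Sm f) (hf0 : Hom 0 f) :
    EE (fun x => ((Mt H x).adjugate * Mt (fun y => f y * H y) x).trace)
      = (n+1) * EE (fun x => f x * DD H x) := by
  have := EE_div (Sm_Yv hs hf) (fun x hx => Yv_tan hs hh h0 hf hf0 hx)
  rw [EE_congr (fun x hx => Yv_div hs hh hf hf0 hx),
    EE_sub (Sm_tr hs (hf.mul hs)).cont ((Sm.const _).mul (hf.mul (Sm_DD hs))).cont,
    EE_const_mul] at this
  linarith

lemma EE_second {H f : Euc n → ℝ} (hs : Sm H) (hh : Hom 1 H) (h0 : ∀ x ≠ 0, H x ≠ 0)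
    (hf : Sm f) (hf0 : Hom 0 f) :
    EE (fun x => f x * ((Mt H x).adjugate * Mt (fun y => f y * H y) x).trace)
      = (n+1) * EE (fun x => f x ^ 2 * DD H x) - EE (fun x => ∑ j, Yv H f j x * pd j f x) := by
  have := EE_div (Y := fun j x => f x * Yv H f j x) (fun j => hf.mul (Sm_Yv hs hf j))
    (fun x hx => by
      have := Yv_tan hs hh h0 hf hf0 hx
      have e : ∀ j, x j * (f x * Yv H f j x) = f x * (x j * Yv H f j x) := by intro j; ring
      simp only [e, ← Finset.mul_sum, this, mul_zero])
  have s1 : Sm (fun x => f x * ((Mt H x).adjugate * Mt (fun y => f y * H y) x).trace) :=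
    hf.mul (Sm_tr hs (hf.mul hs))
  have s2 : Sm (fun x => f x ^ 2 * DD H x) :=
    (hf.mul (hf.mul (Sm_DD hs))).congr (fun x _ => by ring)
  have s3 : Sm (fun x => ∑ j, Yv H f j x * pd j f x) :=
    Sm.sum fun j _ => (Sm_Yv hs hf j).mul (hf.pd j)
  have e : ∀ x ≠ 0, ∑ j, pd j (fun x => f x * Yv H f j x) x
      = (f x * ((Mt H x).adjugate * Mt (fun y => f y * H y) x).trace
        - (n+1) * (f x ^ 2 * DD H x)) + ∑ j, Yv H f j x * pd j f x := by
    intro x hx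
    have : ∀ j, pd j (fun x => f x * Yv H f j x) x
        = f x * pd j (Yv H f j) x + Yv H f j x * pd j f x := by
      intro j; rw [pd_mul j (hf.diff hx) ((Sm_Yv hs hf j).diff hx)]; ring
    simp only [this, Finset.sum_add_distrib, ← Finset.mul_sum, Yv_div hs hh hf hf0 hx]; ring
  rw [EE_congr e, EE_add (s1.sub ((Sm.const _).mul s2)).cont s3.cont,
    EE_sub s1.cont ((Sm.const _).mul s2).cont, EE_const_mul] at this
  linarith

end PDsec

section PEsec
variable {n : ℕ}

def QQ (H : Euc n → ℝ) (x v : Euc n) : ℝ := ∑ i, ∑ j, v i * v j * pd i (pd j H) x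

structure Good (H : Euc n → ℝ) : Prop where
  sm : Sm H
  hom : ∀ c : ℝ, 0 < c → ∀ x : Euc n, H (c • x) = c * H x
  pos1 : ∀ x : Euc n, ‖x‖ = 1 → 0 < H x
  conv : ∀ x v : Euc n, ‖x‖ = 1 → ‖v‖ = 1 → ⟪x, v⟫ = 0 → 0 < QQ H x v

lemma Good.hom1 {H : Euc n → ℝ} (h : Good H) : Hom 1 H := fun c hc x _ => by simp [h.hom c hc x]

lemma Good.pos {H : Euc n → ℝ} (h : Good H) {x : Euc n} (hx : x ≠ 0) : 0 < H x := by
  have hn : 0 < ‖x‖ := norm_pos_iff.2 hx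
  have h1 := h.pos1 (‖x‖⁻¹ • x) (by rw [norm_smul, norm_inv, norm_norm]; field_simp)
  rw [h.hom _ (inv_pos.2 hn)] at h1
  exact pos_of_mul_pos_right h1 (inv_pos.2 hn).le

lemma Good.zero {H : Euc n → ℝ} (h : Good H) : H 0 = 0 := by
  have := h.hom 2 (by norm_num) 0; simp at this; linarith

lemma inner_eq (x v : Euc n) : ⟪x, v⟫ = ∑ i, x i * v i := by
  simp [PiLp.inner_apply, mul_comm]

lemma nsq_eq (x : Euc n) : ‖x‖^2 = ∑ i, x i * x i := by
  rw [← real_inner_self_eq_norm_sq, inner_eq]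

lemma QQ_add_x {H : Euc n → ℝ} (hs : Sm H) (hh : Hom 1 H) {x : Euc n} (hx : x ≠ 0) (v : Euc n)
    (c : ℝ) : QQ H x (v + c • x) = QQ H x v := by
  have h1 : ∀ j, ∑ i, x i * pd i (pd j H) x = 0 := hess_x hs hh hx
  have h2 : ∀ i, ∑ j, x j * pd i (pd j H) x = 0 := by
    intro i; rw [← h1 i]; exact Finset.sum_congr rfl fun j _ => by rw [pd_comm hs i j hx]
  have e : ∀ i j, (v + c • x) i * (v + c • x) j * pd i (pd j H) x
      = v i * v j * pd i (pd j H) x + c * v i * (x j * pd i (pd j H) x)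
        + c * v j * (x i * pd i (pd j H) x) + c^2 * x i * (x j * pd i (pd j H) x) := by
    intro i j; simp; ring
  unfold QQ
  simp only [e, Finset.sum_add_distrib, ← Finset.mul_sum, h2]
  have : ∑ i, ∑ j, c * v j * (x i * pd i (pd j H) x) = 0 := by
    rw [Finset.sum_comm]; simp only [← Finset.mul_sum, h1]; simp
  rw [this]; simp

lemma QQ_smul (H : Euc n → ℝ) (x v : Euc n) (c : ℝ) : QQ H x (c • v) = c^2 * QQ H x v := by
  simp only [QQ, Finset.mul_sum]
  refine Finset.sum_congr rfl fun i _ => Finset.sum_congr rfl fun j _ => ?_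
  simp; ring

lemma QQ_smul_x {H : Euc n → ℝ} (hh : Hom 1 H) {x : Euc n} (hx : x ≠ 0) (v : Euc n) {c : ℝ}
    (hc : 0 < c) : QQ H (c • x) v = c⁻¹ * QQ H x v := by
  simp only [QQ, Finset.mul_sum]
  refine Finset.sum_congr rfl fun i _ => Finset.sum_congr rfl fun j _ => ?_
  rw [((hh.pd j).pd i) c hc x hx]; simp; ring

lemma Good.QQ_pos {H : Euc n → ℝ} (h : Good H) {x v : Euc n} (hx : x ≠ 0) (hv : ∀ c : ℝ, v ≠ c • x) :
    0 < QQ H x v := by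
  have hn : 0 < ‖x‖ := norm_pos_iff.2 hx
  set u : Euc n := ‖x‖⁻¹ • x with hu
  have hu1 : ‖u‖ = 1 := by rw [hu, norm_smul, norm_inv, norm_norm]; field_simp
  have hu0 : u ≠ 0 := by intro e; rw [e] at hu1; simp at hu1
  have hxu : x = ‖x‖ • u := by rw [hu, smul_smul, mul_inv_cancel₀ hn.ne', one_smul]
  set w : Euc n := v + (-⟪u, v⟫) • u with hw
  have hw0 : w ≠ 0 := by
    intro e
    apply hv (⟪u, v⟫ * ‖x‖⁻¹)
    have : v = ⟪u, v⟫ • u := by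
      have h2 : v + (-⟪u, v⟫) • u = 0 := e
      rw [neg_smul, ← sub_eq_add_neg, sub_eq_zero] at h2; exact h2
    rw [mul_smul, ← hu]; exact this
  have hwn : 0 < ‖w‖ := norm_pos_iff.2 hw0
  have hwu : ⟪u, w⟫ = 0 := by
    rw [hw, inner_add_right, inner_smul_right, real_inner_self_eq_norm_sq, hu1]; ring
  have e1 : QQ H x v = ‖x‖⁻¹ * QQ H u v := by
    conv_lhs => rw [hxu]
    exact QQ_smul_x h.hom1 hu0 v hn
  have e2 : QQ H u v = QQ H u w := (QQ_add_x h.sm h.hom1 hu0 v _).symm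
  have e3 : w = ‖w‖ • (‖w‖⁻¹ • w) := by rw [smul_smul, mul_inv_cancel₀ hwn.ne', one_smul]
  rw [e1, e2, e3, QQ_smul]
  have := h.conv u (‖w‖⁻¹ • w) hu1 (by rw [norm_smul, norm_inv, norm_norm]; field_simp)
    (by rw [inner_smul_right, hwu, mul_zero])
  positivity

lemma bmat_quad (H : Euc n → ℝ) (x v : Euc n) :
    (v : Fin (n+1) → ℝ) ⬝ᵥ (bmat n H x *ᵥ (v : Fin (n+1) → ℝ)) = QQ H x v + H x * ⟪x, v⟫^2 := by
  have e : ∀ i j, v i * (bmat n H x i j * v j)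
      = v i * v j * pd i (pd j H) x + H x * ((x i * v i) * (x j * v j)) := by
    intro i j
    have : bmat n H x i j = pd i (pd j H) x + H x * (x i * x j) := rfl
    rw [this]; ring
  simp only [dotProduct, mulVec, Finset.mul_sum, e, Finset.sum_add_distrib]
  rw [QQ, inner_eq, sq, Finset.sum_mul_sum]
  simp only [Finset.mul_sum]

lemma Good.bmat_pd {H : Euc n → ℝ} (h : Good H) {x : Euc n} (hx : ‖x‖ = 1) :
    (bmat n H x).PosDef := by
  have hx0 : x ≠ 0 := by intro e; rw [e] at hx; simp at hx
  apply Matrix.PosDef.of_dotProduct_mulVec_pos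
  · ext i j
    have : ∀ i j, bmat n H x i j = pd i (pd j H) x + H x * (x i * x j) := fun _ _ => rfl
    simp only [conjTranspose_apply, star_trivial, this]
    rw [pd_comm h.sm i j hx0]; ring
  · intro v hv
    have e := bmat_quad H x (WithLp.toLp 2 v)
    simp only [star_trivial] at e ⊢
    rw [e]
    by_cases hc : ∃ c : ℝ, WithLp.toLp 2 v = c • x
    · obtain ⟨c, hc⟩ := hc
      have hc0 : c ≠ 0 := by
        rintro rfl
        apply hv; simpa using hc
      have := h.pos1 x hx
      have q : QQ H x (c • x) = 0 := by
        have := QQ_add_x h.sm h.hom1 hx0 0 c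
        rw [zero_add] at this; rw [this]; simp [QQ]
      rw [hc, q, inner_smul_right, real_inner_self_eq_norm_sq, hx]
      positivity
    · push Not at hc
      have := h.QQ_pos hx0 hc
      have := h.pos1 x hx
      positivity

lemma good_of_posdef {H : Euc n → ℝ} (hs : Sm H)
    (hh : ∀ c : ℝ, 0 < c → ∀ x : Euc n, H (c • x) = c * H x)
    (hp : ∀ x ∈ sphere (0 : Euc n) 1, 0 < H x)
    (hb : ∀ x ∈ sphere (0 : Euc n) 1, (bmat n H x).PosDef) : Good H := by
  refine ⟨hs, hh, fun x hx => hp x (by simpa using hx), fun x v hx hv hxv => ?_⟩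
  have hv0 : (v : Fin (n+1) → ℝ) ≠ 0 := by
    intro e
    have : v = 0 := by ext i; exact congrFun e i
    rw [this] at hv; simp at hv
  have := (hb x (by simpa using hx)).dotProduct_mulVec_pos hv0
  rw [star_trivial, bmat_quad, hxv] at this
  simpa using this

lemma DD_eq_bmat {H : Euc n → ℝ} (hs : Sm H) (hh : Hom 1 H) {x : Euc n} (hx : ‖x‖ = 1)
    (hp : H x ≠ 0) : DD H x = (bmat n H x).det := by
  have hx0 : x ≠ 0 := by intro e; rw [e] at hx; simp at hx
  have hb : ∀ i j, bmat n H x i j = pd i (pd j H) x + H x * (x i * x j) := fun _ _ => rfl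
  have hxx : ∑ i, x i * x i = 1 := by rw [← nsq_eq, hx]; norm_num
  set u : Fin (n+1) → ℝ := fun i => (pd i H x - H x * x i) / H x with hu
  have e : Mt H x = (1 + replicateCol Unit u * replicateRow Unit (x : Fin (n+1) → ℝ)) * bmat n H x := by
    rw [Matrix.add_mul, Matrix.one_mul, Matrix.mul_assoc]
    ext i j
    have h1 : ∑ k, x k * bmat n H x k j = H x * x j := by
      have : ∀ k, x k * bmat n H x k j = x k * pd k (pd j H) x + H x * x j * (x k * x k) := by
        intro k; rw [hb]; ring
      simp only [this, Finset.sum_add_distrib, ← Finset.mul_sum, hess_x hs hh hx0, hxx]; ring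
    rw [Matrix.add_apply, Matrix.mul_apply]
    simp only [Finset.univ_unique, Finset.sum_singleton, replicateCol_apply, Matrix.mul_apply,
      replicateRow_apply, h1]
    rw [Mt_eq hs hx0, hb, hx, pd_comm hs j i hx0, hu]
    field_simp; ring
  have h2 : (x : Fin (n+1) → ℝ) ⬝ᵥ u = 0 := by
    have h3 := hh.euler hs hx0
    simp only [Int.cast_one, one_mul] at h3
    have : ∀ i, x i * u i = (H x)⁻¹ * (x i * pd i H x) - x i * x i := by
      intro i; rw [hu]; field_simp
    simp only [dotProduct, this, Finset.sum_sub_distrib, ← Finset.mul_sum, h3, hxx]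
    field_simp; ring
  rw [DD, e, Matrix.det_mul, det_one_add_replicateCol_mul_replicateRow, h2]; ring

lemma Hom_DD {H : Euc n → ℝ} (hh : Hom 1 H) : Hom 0 (DD H) := by
  intro c hc x hx
  have : Mt H (c • x) = Mt H x := by
    ext i j
    have := ((Hom_T hh i).pd j) c hc x hx
    simpa [Mt] using this
  simp [DD, this]

lemma Good.DD_pos {H : Euc n → ℝ} (h : Good H) {x : Euc n} (hx : x ≠ 0) : 0 < DD H x := by
  have hn : 0 < ‖x‖ := norm_pos_iff.2 hx
  have hu1 : ‖‖x‖⁻¹ • x‖ = 1 := by rw [norm_smul, norm_inv, norm_norm]; field_simp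
  have h1 := Hom_DD h.hom1 ‖x‖⁻¹ (inv_pos.2 hn) x hx
  rw [zpow_zero, one_mul] at h1
  rw [← h1, DD_eq_bmat h.sm h.hom1 hu1 (h.pos1 _ hu1).ne']
  exact (h.bmat_pd hu1).det_pos

/-- Gradient vector. -/
def gr (H : Euc n → ℝ) (x : Euc n) : Euc n := WithLp.toLp 2 (fun i => pd i H x)

lemma gr_inner (H : Euc n → ℝ) (x v : Euc n) : ⟪gr H x, v⟫ = fderiv ℝ H x v := by
  rw [fd_eq, inner_eq]; exact Finset.sum_congr rfl fun i _ => mul_comm _ _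

lemma Good.gr_self {H : Euc n → ℝ} (h : Good H) {x : Euc n} (hx : x ≠ 0) : ⟪gr H x, x⟫ = H x := by
  rw [gr_inner, fd_eq, h.hom1.euler h.sm hx]; simp

lemma Good.strict {H : Euc n → ℝ} (h : Good H) {x z : Euc n} (hx : x ≠ 0) (hz : z ≠ 0)
    (hxz : ∀ c : ℝ, 0 < c → z ≠ c • x) : ⟪gr H x, z⟫ < H z := by
  by_cases hc : ∃ c : ℝ, z = c • x
  · obtain ⟨c, rfl⟩ := hc
    have hc : c ≤ 0 := by
      by_contra h'; exact hxz c (not_le.1 h') rfl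
    rw [inner_smul_right, h.gr_self hx]
    have := h.pos hz
    have := h.pos hx
    nlinarith
  · push Not at hc
    have hl : ∀ t : ℝ, x + t • (z - x) ≠ 0 := by
      intro t e
      by_cases ht : t = 0
      · subst ht; simp at e; exact hx e
      · apply hc (1 - t⁻¹)
        have : t⁻¹ • (x + t • (z - x)) = 0 := by rw [e, smul_zero]
        rw [smul_add, smul_smul, inv_mul_cancel₀ ht, one_smul] at this
        rw [sub_smul, one_smul]
        have h3 : z = x - t⁻¹ • x + (t⁻¹ • x + (z - x)) := by abel
        rw [this, add_zero] at h3; exact h3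
    have hl2 : ∀ t : ℝ, ∀ c : ℝ, z - x ≠ c • (x + t • (z - x)) := by
      intro t c e
      -- (1 - c t)(z-x) = c x
      have e2 : (1 - c * t) • (z - x) = c • x := by
        rw [sub_smul, one_smul]; nth_rewrite 1 [e]; rw [smul_add, smul_smul]; abel
      by_cases h1 : 1 - c * t = 0
      · rw [h1, zero_smul] at e2
        have hc0 : c = 0 := by
          rcases smul_eq_zero.1 e2.symm with h | h
          · exact h
          · exact absurd h hx
        rw [hc0] at h1; simp at h1
      · apply hc (1 + (1 - c*t)⁻¹ * c)
        have : (1 - c*t)⁻¹ • ((1 - c * t) • (z - x)) = (1 - c*t)⁻¹ • (c • x) := by rw [e2]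
        rw [smul_smul, inv_mul_cancel₀ h1, one_smul, smul_smul] at this
        rw [add_smul, one_smul, ← this]; abel
    set v := z - x with hv
    have hline : ∀ t : ℝ, HasDerivAt (fun t : ℝ => x + t • v) v t := by
      intro t
      simpa using ((hasDerivAt_id t).smul_const v).const_add x
    have hF : ∀ (F : Euc n → ℝ), Sm F → ∀ t : ℝ,
        HasDerivAt (fun t : ℝ => F (x + t • v)) (∑ i, v i * pd i F (x + t • v)) t := by
      intro F hFs t
      rw [← fd_eq]
      exact ((hFs.diff (hl t)).hasFDerivAt).comp_hasDerivAt t (hline t)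
    have h1 := hF H h.sm
    have h2 : ∀ t : ℝ, HasDerivAt (fun t : ℝ => ∑ i, v i * pd i H (x + t • v))
        (∑ i, v i * ∑ j, v j * pd j (pd i H) (x + t • v)) t := by
      intro t
      exact HasDerivAt.fun_sum fun i _ => (hF (pd i H) (h.sm.pd i) t).const_mul (v i)
    have h3 : StrictMono (fun t : ℝ => ∑ i, v i * pd i H (x + t • v)) := by
      apply strictMono_of_deriv_pos
      intro t
      rw [(h2 t).deriv]
      have := h.QQ_pos (hl t) (hl2 t)
      rw [QQ, Finset.sum_comm] at this
      convert this using 1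
      refine Finset.sum_congr rfl fun i _ => ?_
      rw [Finset.mul_sum]; exact Finset.sum_congr rfl fun j _ => by ring
    obtain ⟨c, hc1, hc2⟩ := exists_hasDerivAt_eq_slope (fun t : ℝ => H (x + t • v)) _
      (zero_lt_one) (fun t _ => (h1 t).continuousAt.continuousWithinAt) (fun t _ => h1 t)
    have h4 := h3 hc1.1
    simp only [zero_smul, add_zero, one_smul, sub_zero, div_one] at h4 hc2
    have e5 : x + v = z := by rw [hv]; abel
    rw [hc2, e5, ← fd_eq, ← gr_inner, hv, inner_sub_right, h.gr_self hx] at h4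
    linarith

lemma Good.le {H : Euc n → ℝ} (h : Good H) {x : Euc n} (hx : x ≠ 0) (z : Euc n) :
    ⟪gr H x, z⟫ ≤ H z := by
  by_cases hz : z = 0
  · subst hz; simp [h.zero]
  by_cases hc : ∃ c : ℝ, 0 < c ∧ z = c • x
  · obtain ⟨c, hc, rfl⟩ := hc
    rw [inner_smul_right, h.gr_self hx, h.hom c hc]
  · push Not at hc
    exact (h.strict hx hz hc).le

def TT (H : Euc n → ℝ) (x : Euc n) : Euc n := ‖x‖ • gr H x

lemma Good.TT_le {H : Euc n → ℝ} (h : Good H) {x z : Euc n} (hx : x ≠ 0) (hz : z ≠ 0)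
    (e : TT H x = TT H z) : ‖z‖ ≤ ‖x‖ := by
  have h1 := congrArg (fun y => ⟪y, z⟫) e
  simp only [TT, inner_smul_left, h.gr_self hz] at h1
  have h2 := h.le hx z
  have h3 := h.pos hz
  have h4 := norm_nonneg x
  simp at h1
  by_contra hc
  nlinarith [mul_le_mul_of_nonneg_left h2 h4]

lemma Good.TT_inj {H : Euc n → ℝ} (h : Good H) {x z : Euc n} (hx : x ≠ 0) (hz : z ≠ 0)
    (e : TT H x = TT H z) : x = z := by
  have hn : ‖x‖ = ‖z‖ := le_antisymm (h.TT_le hz hx e.symm) (h.TT_le hx hz e)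
  have hn0 : 0 < ‖x‖ := norm_pos_iff.2 hx
  by_cases hc : ∃ c : ℝ, 0 < c ∧ z = c • x
  · obtain ⟨c, hc, rfl⟩ := hc
    rw [norm_smul, Real.norm_eq_abs, abs_of_pos hc] at hn
    have : c = 1 := by nlinarith
    rw [this, one_smul]
  · push Not at hc
    have h2 := h.strict hx hz hc
    have h1 := congrArg (fun y => ⟪y, z⟫) e
    simp only [TT, inner_smul_left, h.gr_self hz] at h1
    rw [← hn] at h1
    simp at h1
    rcases h1 with h1 | h1
    · linarith
    · exact absurd h1 hx

def KK (H : Euc n → ℝ) : Set (Euc n) := {y | ∀ x : Euc n, ⟪x, y⟫ ≤ H x}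

def Bs (n : ℕ) : Set (Euc n) := closedBall 0 1 ∩ {0}ᶜ

lemma Good.TT_image {H : Euc n → ℝ} (h : Good H) : TT H '' Bs n = KK H ∩ {0}ᶜ := by
  apply Set.Subset.antisymm
  · rintro _ ⟨x, ⟨hx1, hx⟩, rfl⟩
    have hx : x ≠ 0 := hx
    have hx1 : ‖x‖ ≤ 1 := by simpa using hx1
    refine ⟨fun z => ?_, fun e => ?_⟩
    · rw [TT, inner_smul_right, real_inner_comm]
      have h1 := h.le hx z
      have h2 : 0 ≤ H z := by
        by_cases hz : z = 0
        · rw [hz, h.zero]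
        · exact (h.pos hz).le
      calc ‖x‖ * ⟪gr H x, z⟫ ≤ ‖x‖ * H z := mul_le_mul_of_nonneg_left h1 (norm_nonneg x)
        _ ≤ 1 * H z := mul_le_mul_of_nonneg_right hx1 h2
        _ = H z := one_mul _
    · have e : TT H x = 0 := e
      have h1 := congrArg (fun y => ⟪y, x⟫) e
      simp only [TT, inner_smul_left, h.gr_self hx, inner_zero_left] at h1
      have := h.pos hx
      have := norm_pos_iff.2 hx
      simp at h1
      rcases h1 with h1 | h1
      · exact hx h1
      · linarith
  · rintro y ⟨hy, hy0⟩
    have hy0 : y ≠ 0 := hy0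
    have hcont : ContinuousOn (fun z : Euc n => ⟪y, z⟫ / H z) (sphere (0 : Euc n) 1) := by
      apply ContinuousOn.div
      · fun_prop
      · exact h.sm.cont.mono (fun z hz e => by
          rw [Set.mem_singleton_iff] at e; rw [e] at hz; simp at hz)
      · intro z hz; exact (h.pos1 z (by simpa using hz)).ne'
    have hyn : 0 < ‖y‖ := norm_pos_iff.2 hy0
    have hsn : (‖y‖⁻¹ • y) ∈ sphere (0 : Euc n) 1 := by
      simp [norm_smul]; field_simp
    obtain ⟨x, hxs, hxm⟩ := (isCompact_sphere (0 : Euc n) 1).exists_isMaxOn ⟨_, hsn⟩ hcont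
    have hx1 : ‖x‖ = 1 := by simpa using hxs
    have hx0 : x ≠ 0 := by intro e; rw [e] at hx1; simp at hx1
    set lam := ⟪y, x⟫ / H x with hlam
    have hle : ∀ z : Euc n, z ≠ 0 → ⟪y, z⟫ - lam * H z ≤ 0 := by
      intro z hz
      have hzn : 0 < ‖z‖ := norm_pos_iff.2 hz
      have h1 := hxm (show (‖z‖⁻¹ • z) ∈ sphere (0 : Euc n) 1 by simp [norm_smul]; field_simp)
      simp only [Set.mem_ofPred_eq] at h1
      rw [inner_smul_right, h.hom _ (inv_pos.2 hzn)] at h1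
      have hHz := h.pos hz
      have e : ‖z‖⁻¹ * ⟪y, z⟫ / (‖z‖⁻¹ * H z) = ⟪y, z⟫ / H z := by field_simp
      rw [e, ← hlam, div_le_iff₀ hHz] at h1
      linarith
    have hHx := h.pos hx0
    have heq : ⟪y, x⟫ - lam * H x = 0 := by rw [hlam]; field_simp; ring
    have hlampos : 0 < lam := by
      have h1 := hle y hy0
      rw [real_inner_self_eq_norm_sq] at h1
      have := h.pos hy0
      by_contra hc
      nlinarith
    have hlam1 : lam ≤ 1 := by
      have h1 := hy x
      rw [hlam, div_le_one hHx, real_inner_comm]; exact h1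
    have hder : HasFDerivAt (fun z : Euc n => ⟪y, z⟫ - lam * H z)
        (innerSL ℝ y - lam • fderiv ℝ H x) x :=
      ((innerSL ℝ y).hasFDerivAt).sub ((h.sm.diff hx0).hasFDerivAt.const_mul lam)
    have hmax : IsLocalMax (fun z : Euc n => ⟪y, z⟫ - lam * H z) x := by
      filter_upwards [Om_nhds hx0] with z hz
      rw [heq]; exact hle z hz
    have hz := hmax.hasFDerivAt_eq_zero hder
    have hyg : y = lam • gr H x := by
      apply ext_inner_right ℝ
      intro v
      have := congrArg (fun L => L v) hz
      simp at this
      rw [inner_smul_left, gr_inner]; simp; linarith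
    refine ⟨lam • x, ⟨?_, ?_⟩, ?_⟩
    · simp [norm_smul, hx1, abs_of_pos hlampos, hlam1]
    · exact smul_ne_zero hlampos.ne' hx0
    · rw [TT, norm_smul, hx1, Real.norm_eq_abs, abs_of_pos hlampos, mul_one, hyg]
      congr 1
      ext i
      have := (h.hom1.pd i) lam hlampos x hx0
      simpa [gr] using this

end PEsec

section PFsec
variable {n : ℕ}

lemma det_euclCLM (A : Matrix (Fin (n+1)) (Fin (n+1)) ℝ) :
    (Matrix.toEuclideanCLM (n := Fin (n+1)) (𝕜 := ℝ) A).det = A.det := by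
  change LinearMap.det (Matrix.toEuclideanLin A) = _
  rw [Matrix.toEuclideanLin_eq_toLin, LinearMap.det_toLin]

lemma TT_deriv {H : Euc n → ℝ} (hs : Sm H) {x : Euc n} (hx : x ≠ 0) (s : Set (Euc n)) :
    HasFDerivWithinAt (TT H) (Matrix.toEuclideanCLM (n := Fin (n+1)) (𝕜 := ℝ) (Mt H x)) s x := by
  rw [hasFDerivWithinAt_euclidean]
  intro i
  have h1 := ((Sm_T hs i).diff hx).hasFDerivAt.hasFDerivWithinAt (s := s)
  have e : fderiv ℝ (fun y => ‖y‖ * pd i H y) x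
      = (PiLp.proj 2 (fun _ => ℝ) i).comp
        (Matrix.toEuclideanCLM (n := Fin (n+1)) (𝕜 := ℝ) (Mt H x)) := by
    ext v
    rw [fd_eq]
    simp [Matrix.mulVec, dotProduct, Mt]
    exact Finset.sum_congr rfl fun i _ => mul_comm _ _
  rw [e] at h1
  exact h1

lemma Good.vol {H : Euc n → ℝ} (h : Good H) :
    volume (KK H) = ∫⁻ x in Bs n, ENNReal.ofReal (DD H x) := by
  have hB : MeasurableSet (Bs n) := isClosed_closedBall.measurableSet.inter
    (measurableSet_singleton _).compl
  have h1 := lintegral_abs_det_fderiv_eq_addHaar_image (volume : Measure (Euc n)) hB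
    (fun x hx => TT_deriv h.sm hx.2 (Bs n)) (fun x hx z hz e => h.TT_inj hx.2 hz.2 e)
  rw [h.TT_image] at h1
  have h2 : volume (KK H ∩ {0}ᶜ) = volume (KK H) := by
    rw [← Set.sdiff_eq]; exact measure_sdiff_null (by simp)
  rw [← h2, ← h1]
  apply setLIntegral_congr_fun hB
  intro x hx
  simp only [det_euclCLM]
  rw [← DD, abs_of_pos (h.DD_pos hx.2)]

lemma polar {g : Euc n → ℝ} (hg : ContinuousOn g {(0 : Euc n)}ᶜ) (hh : Hom 0 g)
    {φ : ℝ → ENNReal} (hφ : Measurable φ) :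
    ∫⁻ x : Euc n, ENNReal.ofReal (g x) * φ ‖x‖
      = (∫⁻ s : sphere (0 : Euc n) 1, ENNReal.ofReal (g s) ∂(volume : Measure (Euc n)).toSphere)
        * ∫⁻ r : Set.Ioi (0:ℝ), φ r ∂(Measure.volumeIoiPow (Module.finrank ℝ (Euc n) - 1)) := by
  have hgs : Measurable (fun s : sphere (0 : Euc n) 1 => ENNReal.ofReal (g s)) := by
    apply ENNReal.measurable_ofReal.comp
    apply Continuous.measurable
    apply hg.comp_continuous continuous_subtype_val
    intro s hs
    rw [Set.mem_singleton_iff] at hs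
    have := s.2; rw [hs] at this; simp at this
  have hφs : Measurable (fun r : Set.Ioi (0:ℝ) => φ r) := hφ.comp measurable_subtype_coe
  rw [← lintegral_prod_mul hgs.aemeasurable hφs.aemeasurable,
    ← ((volume : Measure (Euc n)).measurePreserving_homeomorphUnitSphereProd).lintegral_comp_emb
      (Homeomorph.measurableEmbedding _)]
  have e : ∫⁻ x : Euc n, ENNReal.ofReal (g x) * φ ‖x‖
      = ∫⁻ x in ({0}ᶜ : Set (Euc n)), ENNReal.ofReal (g x) * φ ‖x‖ := by
    rw [Measure.restrict_eq_self_of_ae_mem]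
    rw [ae_iff]; simp
  rw [e, ← lintegral_subtype_comap (measurableSet_singleton _).compl]
  apply lintegral_congr
  rintro ⟨x, hx⟩
  have hn : 0 < ‖x‖ := norm_pos_iff.2 hx
  have h1 := hh ‖x‖⁻¹ (inv_pos.2 hn) x hx
  rw [zpow_zero, one_mul] at h1
  simp [h1]

lemma polar_ratio {g : Euc n → ℝ} (hg : ContinuousOn g {(0 : Euc n)}ᶜ) (hh : Hom 0 g)
    (hp : ∀ x ≠ 0, 0 ≤ g x) :
    (∫⁻ x in Bs n, ENNReal.ofReal (g x)) * ENNReal.ofReal (EE (fun _ : Euc n => 1))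
      = ENNReal.ofReal (EE g) * volume (Bs n) := by
  have key : ∀ {g : Euc n → ℝ}, ContinuousOn g {(0 : Euc n)}ᶜ → Hom 0 g → (∀ x ≠ 0, 0 ≤ g x) →
      (ENNReal.ofReal (EE g) = (∫⁻ s : sphere (0 : Euc n) 1, ENNReal.ofReal (g s)
        ∂(volume : Measure (Euc n)).toSphere) * ∫⁻ r : Set.Ioi (0:ℝ), ENNReal.ofReal (bet ((r:ℝ)^2))
          ∂(Measure.volumeIoiPow (Module.finrank ℝ (Euc n) - 1))) ∧
      ((∫⁻ x in Bs n, ENNReal.ofReal (g x)) = (∫⁻ s : sphere (0 : Euc n) 1, ENNReal.ofReal (g s)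
        ∂(volume : Measure (Euc n)).toSphere) * ∫⁻ r : Set.Ioi (0:ℝ),
          (Set.Ioc (0:ℝ) 1).indicator (fun _ => (1:ENNReal)) (r:ℝ)
          ∂(Measure.volumeIoiPow (Module.finrank ℝ (Euc n) - 1))) := by
    intro g hg hh hp
    constructor
    · rw [← polar hg hh (φ := fun r => ENNReal.ofReal (bet (r^2)))
        (ENNReal.measurable_ofReal.comp (bet.continuous.comp (continuous_pow 2)).measurable)]
      unfold EE
      rw [ofReal_integral_eq_lintegral_ofReal (eta_int hg)]
      · apply lintegral_congr
        intro x
        rw [ENNReal.ofReal_mul (eta_nonneg x), mul_comm]; rfl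
      · filter_upwards with x
        by_cases hx : x = 0
        · subst hx; simp [eta_zero]
        · exact mul_nonneg (eta_nonneg x) (hp x hx)
    · rw [← polar hg hh (φ := (Set.Ioc (0:ℝ) 1).indicator (fun _ => (1:ENNReal)))
        (measurable_const.indicator measurableSet_Ioc)]
      have hB : MeasurableSet (Bs n) := isClosed_closedBall.measurableSet.inter
        (measurableSet_singleton _).compl
      rw [← lintegral_indicator hB]
      apply lintegral_congr
      intro x
      by_cases hx : x ∈ Bs n
      · have : ‖x‖ ∈ Set.Ioc (0:ℝ) 1 := ⟨norm_pos_iff.2 hx.2, by simpa using hx.1⟩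
        simp [hx, this]
      · have : ‖x‖ ∉ Set.Ioc (0:ℝ) 1 := fun h' => hx ⟨by simpa using h'.2, by
          simpa using h'.1⟩
        rw [Set.indicator_of_notMem hx, Set.indicator_of_notMem this, mul_zero]
  obtain ⟨a1, a2⟩ := key hg hh hp
  obtain ⟨b1, b2⟩ := key (g := fun _ => (1:ℝ)) continuousOn_const
    (fun c _ x _ => by simp) (fun x _ => zero_le_one)
  have b3 : ∫⁻ x in Bs n, ENNReal.ofReal (1:ℝ) = volume (Bs n) := by simp
  rw [b3] at b2
  rw [a1, a2, b1, b2]; ring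

lemma KK_closed (H : Euc n → ℝ) : IsClosed (KK H) := by
  have : KK H = ⋂ x : Euc n, {y | ⟪x, y⟫ ≤ H x} := by ext y; simp [KK]
  rw [this]
  exact isClosed_iInter fun x => isClosed_le (by fun_prop) continuous_const

lemma BM {H H1 H2 : Euc n → ℝ} (h : Good H) (h1 : Good H1) (h2 : Good H2)
    (hs : ∀ x, H1 x + H2 x = 2 * H x) :
    EE (DD H1) * EE (DD H2) ≤ EE (DD H) ^ 2 := by
  have hb := bmEuc (KK_closed H).measurableSet (KK_closed H1).measurableSet
    (KK_closed H2).measurableSet (fun y hy z hz x => by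
      rw [inner_smul_right, inner_add_right]
      have := hs x; have := hy x; have := hz x
      linarith)
  set e : ENNReal := ENNReal.ofReal (EE (fun _ : Euc n => 1)) with he
  set w : ENNReal := volume (Bs n) with hw
  have r : ∀ {G : Euc n → ℝ}, Good G → volume (KK G) * e = ENNReal.ofReal (EE (DD G)) * w := by
    intro G hG
    rw [hG.vol]; exact polar_ratio (Sm_DD hG.sm).cont (Hom_DD hG.hom1) (fun x hx => (hG.DD_pos hx).le)
  have p : ∀ {G : Euc n → ℝ}, Good G → 0 ≤ EE (DD G) := fun hG => EE_nonneg fun x hx => (hG.DD_pos hx).le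
  have hw0 : w ≠ 0 := by
    have : volume (Bs n) = volume (closedBall (0 : Euc n) 1) := by
      rw [Bs, ← Set.sdiff_eq]; exact measure_sdiff_null (by simp)
    rw [hw, this]
    exact (Metric.measure_closedBall_pos volume (0 : Euc n) one_pos).ne'
  have hwt : w ≠ ⊤ := by
    apply ne_top_of_le_ne_top _ (measure_mono (Set.inter_subset_left : Bs n ⊆ closedBall 0 1))
    exact measure_closedBall_lt_top.ne
  have h3 : (ENNReal.ofReal (EE (DD H1)) * w) * (ENNReal.ofReal (EE (DD H2)) * w)
      ≤ (ENNReal.ofReal (EE (DD H)) * w)^2 := by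
    rw [← r h, ← r h1, ← r h2]
    calc _ = (volume (KK H1) * volume (KK H2)) * e^2 := by ring
      _ ≤ volume (KK H)^2 * e^2 := by gcongr
      _ = _ := by ring
  have h4 : (ENNReal.ofReal (EE (DD H1)) * ENNReal.ofReal (EE (DD H2))) * w^2
      ≤ (ENNReal.ofReal (EE (DD H)))^2 * w^2 := by
    calc _ = _ := by ring
      _ ≤ _ := h3
      _ = _ := by ring
  have h5 := (ENNReal.mul_le_mul_iff_left (pow_ne_zero 2 hw0) (ENNReal.pow_ne_top hwt)).1 h4
  rw [← ENNReal.ofReal_mul (p h1), ← ENNReal.ofReal_pow (p h)] at h5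
  exact (ENNReal.ofReal_le_ofReal_iff (by positivity)).1 h5

end PFsec

section PGsec
variable {n : ℕ}

lemma dEE {g g' : ℝ → Euc n → ℝ} {ε : ℝ}
    (hg : ∀ t ∈ Set.Ioo (-ε) ε, ContinuousOn (g t) {(0 : Euc n)}ᶜ)
    (hg' : ContinuousOn (fun z : ℝ × Euc n => g' z.1 z.2) (Set.Ioo (-ε) ε ×ˢ {(0 : Euc n)}ᶜ))
    (hd : ∀ t ∈ Set.Ioo (-ε) ε, ∀ x : Euc n, x ≠ 0 → HasDerivAt (fun s => g s x) (g' t x) t)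
    {t : ℝ} (ht : t ∈ Set.Ioo (-ε) ε) :
    HasDerivAt (fun s => EE (g s)) (EE (g' t)) t := by
  obtain ⟨δ, hδ, hsub⟩ := Metric.nhds_basis_closedBall.mem_iff.1 (Ioo_mem_nhds ht.1 ht.2)
  obtain ⟨C, hC⟩ := ((isCompact_closedBall t δ).prod (Ann_compact (n := n))).exists_bound_of_continuousOn
    (hg'.mono (Set.prod_mono hsub Ann_sub))
  have hc' : ContinuousOn (g' t) {(0 : Euc n)}ᶜ :=
    hg'.comp (f := fun x : Euc n => (t, x)) (by fun_prop) (fun x hx => ⟨ht, hx⟩)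
  unfold EE
  refine (hasDerivAt_integral_of_dominated_loc_of_deriv_le (bound := fun x => eta x * C)
    (F := fun s x => eta x * g s x) (F' := fun s x => eta x * g' s x)
    (Metric.closedBall_mem_nhds t hδ) ?_ (eta_int (hg t ht))
    (eta_int hc').aestronglyMeasurable ?_ (eta_int continuousOn_const) ?_).2
  · filter_upwards [Ioo_mem_nhds ht.1 ht.2] with s hs
    exact (eta_int (hg s hs)).aestronglyMeasurable
  · filter_upwards with x s hs
    by_cases hx : x ∈ Ann n
    · rw [norm_mul, Real.norm_of_nonneg (eta_nonneg x)]
      exact mul_le_mul_of_nonneg_left (hC (s, x) ⟨hs, hx⟩) (eta_nonneg x)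
    · simp [eta_Ann' hx]
  · filter_upwards with x s hs
    by_cases hx : x = 0
    · subst hx; simp [eta_zero, hasDerivAt_const]
    · exact (hd s (hsub hs) x hx).const_mul _

def Pt (H φ : Euc n → ℝ) (t : ℝ) (x : Euc n) : ℝ := H x + t * φ x

lemma Sm_Pt {H φ : Euc n → ℝ} (hs : Sm H) (hφ : Sm φ) (t : ℝ) : Sm (Pt H φ t) :=
  hs.add ((Sm.const t).mul hφ)

lemma pd_Pt {H φ : Euc n → ℝ} (hs : Sm H) (hφ : Sm φ) (t : ℝ) (i : Fin (n+1)) {x : Euc n}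
    (hx : x ≠ 0) : pd i (Pt H φ t) x = Pt (pd i H) (pd i φ) t x := by
  unfold Pt
  rw [pd_add i (hs.diff hx) (((Sm.const t).mul hφ).diff hx), pd_const_mul i t (hφ.diff hx)]

lemma pd2_Pt {H φ : Euc n → ℝ} (hs : Sm H) (hφ : Sm φ) (t : ℝ) (i j : Fin (n+1)) {x : Euc n}
    (hx : x ≠ 0) : pd i (pd j (Pt H φ t)) x = pd i (pd j H) x + t * pd i (pd j φ) x := by
  rw [pd_congr (fun x hx => pd_Pt hs hφ t j hx) i hx, pd_Pt (hs.pd j) (hφ.pd j) t i hx]; rfl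

lemma QQ_Pt {H φ : Euc n → ℝ} (hs : Sm H) (hφ : Sm φ) (t : ℝ) {x : Euc n}
    (hx : x ≠ 0) (v : Euc n) : QQ (Pt H φ t) x v = QQ H x v + t * QQ φ x v := by
  simp only [QQ, Finset.mul_sum, ← Finset.sum_add_distrib]
  refine Finset.sum_congr rfl fun i _ => Finset.sum_congr rfl fun j _ => ?_
  rw [pd2_Pt hs hφ t i j hx]; ring

lemma Mt_Pt {H φ : Euc n → ℝ} (hs : Sm H) (hφ : Sm φ) (t : ℝ) {x : Euc n}
    (hx : x ≠ 0) : Mt (Pt H φ t) x = Mt H x + t • Mt φ x := by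
  ext i j
  rw [Mt_eq (Sm_Pt hs hφ t) hx, pd2_Pt hs hφ t j i hx, pd_Pt hs hφ t i hx]
  simp only [Matrix.add_apply, Matrix.smul_apply, smul_eq_mul, Mt_eq hs hx, Mt_eq hφ hx, Pt]; ring

lemma Mt_congr {F G : Euc n → ℝ} (h : ∀ x ≠ 0, F x = G x) {x : Euc n} (hx : x ≠ 0) :
    Mt F x = Mt G x := by
  ext i j
  simp only [Mt, Matrix.of_apply]
  exact pd_congr (fun y hy => by rw [pd_congr h i hy]) j hx

lemma QQ_cont {H : Euc n → ℝ} (hs : Sm H) :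
    ContinuousOn (fun z : Euc n × Euc n => QQ H z.1 z.2) ({(0 : Euc n)}ᶜ ×ˢ Set.univ) := by
  unfold QQ
  refine continuousOn_finsetSum _ fun i _ => continuousOn_finsetSum _ fun j _ => ?_
  refine ContinuousOn.mul (by fun_prop) ?_
  exact ((hs.pd j).pd i).cont.comp (by fun_prop) (fun z hz => hz.1)

lemma perturb {H f : Euc n → ℝ} (h : Good H) (hf : Sm f) (hf0 : Hom 0 f) :
    ∃ ε > 0, ∀ t ∈ Set.Ioo (-ε) ε, Good (Pt H (fun x => f x * H x) t) ∧
      ∀ x ≠ 0, 0 < 1 + t * f x := by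
  have hφ : Sm (fun x => f x * H x) := hf.mul h.sm
  have S0 : sphere (0 : Euc n) 1 ⊆ {(0 : Euc n)}ᶜ := by
    rintro x hx rfl; simp at hx
  obtain ⟨C1, hC1⟩ := (isCompact_sphere (0 : Euc n) 1).exists_bound_of_continuousOn
    (hf.cont.mono S0)
  set S : Set (Euc n × Euc n) := (sphere 0 1 ×ˢ sphere 0 1) ∩ {z | ⟪z.1, z.2⟫ = 0} with hS
  have Sc : IsCompact S := ((isCompact_sphere _ _).prod (isCompact_sphere _ _)).inter_right
    (isClosed_eq (by fun_prop) continuous_const)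
  have Ss : S ⊆ ({(0 : Euc n)}ᶜ ×ˢ Set.univ) := fun z hz => ⟨S0 hz.1.1, trivial⟩
  have Sp : ∀ z ∈ S, 0 < QQ H z.1 z.2 := fun z hz =>
    h.conv _ _ (by simpa using hz.1.1) (by simpa using hz.1.2) hz.2
  obtain ⟨C2, hC2⟩ := Sc.exists_bound_of_continuousOn
    (((QQ_cont hφ).mono Ss).div ((QQ_cont h.sm).mono Ss) (fun z hz => (Sp z hz).ne'))
  have hD : 0 < |C1| + |C2| + 1 := by positivity
  refine ⟨1 / (|C1| + |C2| + 1), by positivity, ?_⟩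
  intro t ht
  have ht1 : |t| * (|C1| + |C2| + 1) < 1 := by
    rw [← lt_div_iff₀ hD]; exact abs_lt.2 ht
  have hft : ∀ x ≠ 0, 0 < 1 + t * f x := by
    intro x hx
    have hn : 0 < ‖x‖ := norm_pos_iff.2 hx
    have h1 := hf0 ‖x‖⁻¹ (inv_pos.2 hn) x hx
    rw [zpow_zero, one_mul] at h1
    have h2 := hC1 (‖x‖⁻¹ • x) (by simp [norm_smul, hn.ne'])
    rw [h1, Real.norm_eq_abs] at h2
    have h3 : |t * f x| < 1 := by
      rw [abs_mul]
      refine lt_of_le_of_lt (mul_le_mul_of_nonneg_left ?_ (abs_nonneg t)) ht1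
      have := le_abs_self C1; have := abs_nonneg C2; linarith
    have := (abs_lt.1 h3).1; linarith
  refine ⟨⟨Sm_Pt h.sm hφ t, ?_, ?_, ?_⟩, hft⟩
  · intro c hc x
    by_cases hx : x = 0
    · subst hx; simp [Pt, h.zero]
    · simp only [Pt]; rw [hf0 c hc x hx, h.hom c hc x]; simp; ring
  · intro x hx
    have hx0 : x ≠ 0 := by rintro rfl; simp at hx
    have : Pt H (fun x => f x * H x) t x = (1 + t * f x) * H x := by simp only [Pt]; ring
    rw [this]; exact mul_pos (hft x hx0) (h.pos1 x hx)
  · intro x v hx hv hxv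
    have hx0 : x ≠ 0 := by rintro rfl; simp at hx
    have hz : (x, v) ∈ S := ⟨⟨by simpa using hx, by simpa using hv⟩, hxv⟩
    rw [QQ_Pt h.sm hφ t hx0]
    have h2 := hC2 _ hz
    have h3 := Sp _ hz
    simp only [Pi.div_apply] at h2
    set q := QQ H x v
    set r := QQ (fun x => f x * H x) x v
    have h4 : |t * (r / q)| < 1 := by
      rw [abs_mul]
      refine lt_of_le_of_lt (mul_le_mul_of_nonneg_left ?_ (abs_nonneg t)) ht1
      have := le_abs_self C2; have := abs_nonneg C1
      rw [Real.norm_eq_abs] at h2; linarith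
    have h5 : q + t * r = q * (1 + t * (r/q)) := by field_simp
    rw [h5]
    exact mul_pos h3 (by have := (abs_lt.1 h4).1; linarith)

lemma det_line {A B : Matrix (Fin (n+1)) (Fin (n+1)) ℝ} (t : ℝ) :
    HasDerivAt (fun s : ℝ => (A + s • B).det) (((A + t • B).adjugate * B).trace) t := by
  have h := det_hasFDeriv (A := fun s : ℝ => A + s • B) (x := t)
    (A' := fun i j => ContinuousLinearMap.toSpanSingleton ℝ (B i j)) (fun i j => by
      have : HasDerivAt (fun s : ℝ => A i j + s * B i j) (B i j) t := by
        simpa using ((hasDerivAt_id t).mul_const (B i j)).const_add (A i j)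
      simpa using this.hasFDerivAt)
  have h2 := h.hasDerivAt
  convert h2 using 1
  simp [Matrix.trace, Matrix.mul_apply]

lemma cont_adj {X : Type*} [TopologicalSpace X] {s : Set X}
    {A : X → Matrix (Fin (n+1)) (Fin (n+1)) ℝ} (h : ContinuousOn A s) :
    ContinuousOn (fun x => (A x).adjugate) s :=
  (Continuous.matrix_adjugate continuous_id).comp_continuousOn h

lemma cont_Mt {H : Euc n → ℝ} (hs : Sm H) : ContinuousOn (Mt H) {(0 : Euc n)}ᶜ :=
  continuousOn_pi.2 fun i => continuousOn_pi.2 fun j => (Sm_Mt hs i j).cont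

lemma poincare0 {H f : Euc n → ℝ} (h : Good H) (hf : Sm f) (hf0 : Hom 0 f)
    (hm : EE (fun x => f x * DD H x) = 0) :
    n * EE (fun x => f x ^ 2 * DD H x) ≤ EE (fun x => ∑ j, Yv H f j x * pd j f x) := by
  obtain ⟨ε, hε, hp⟩ := perturb h hf hf0
  set φ : Euc n → ℝ := fun x => f x * H x with hφd
  have hφ : Sm φ := hf.mul h.sm
  set I := Set.Ioo (-ε) ε
  have h0I : (0:ℝ) ∈ I := ⟨by linarith, hε⟩
  have cA : ContinuousOn (fun z : ℝ × Euc n => Mt H z.2 + z.1 • Mt φ z.2)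
      (I ×ˢ {(0 : Euc n)}ᶜ) :=
    ((cont_Mt h.sm).comp continuousOn_snd (fun z hz => hz.2)).add
      (continuousOn_fst.smul ((cont_Mt hφ).comp continuousOn_snd (fun z hz => hz.2)))
  have cT : ContinuousOn (fun z : ℝ × Euc n =>
      ((Mt H z.2 + z.1 • Mt φ z.2).adjugate * Mt φ z.2).trace) (I ×ˢ {(0 : Euc n)}ᶜ) := by
    have h1 := (cont_adj cA).mul ((cont_Mt hφ).comp continuousOn_snd (fun z hz => hz.2))
    exact (Continuous.matrix_trace continuous_id).comp_continuousOn h1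
  have cDet : ContinuousOn (fun z : ℝ × Euc n => (Mt H z.2 + z.1 • Mt φ z.2).det)
      (I ×ˢ {(0 : Euc n)}ᶜ) :=
    (Continuous.matrix_det continuous_id).comp_continuousOn cA
  have cf : ContinuousOn (fun z : ℝ × Euc n => f z.2) (I ×ˢ {(0 : Euc n)}ᶜ) :=
    hf.cont.comp continuousOn_snd (fun z hz => hz.2)
  have cq : ContinuousOn (fun z : ℝ × Euc n => f z.2 / (1 + z.1 * f z.2)) (I ×ˢ {(0 : Euc n)}ᶜ) :=
    cf.div (continuousOn_const.add (continuousOn_fst.mul cf)) (fun z hz => ((hp z.1 hz.1).2 z.2 hz.2).ne')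
  set V : ℝ → ℝ := fun t => EE (DD (Pt H φ t)) with hV
  set W : ℝ → ℝ := fun t => EE (fun x => f x / (1 + t * f x) * (Mt H x + t • Mt φ x).det) with hW
  have dV : ∀ t ∈ I, HasDerivAt V ((n+1) * W t) t := by
    intro t ht
    have h1 := dEE (g := fun t x => (Mt H x + t • Mt φ x).det)
      (g' := fun t x => ((Mt H x + t • Mt φ x).adjugate * Mt φ x).trace)
      (fun t ht => cDet.comp (f := fun x : Euc n => (t, x)) (by fun_prop) (fun x hx => ⟨ht, hx⟩))
      cT (fun t _ x _ => det_line t) ht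
    have e1 : V = fun s => EE (fun x => (Mt H x + s • Mt φ x).det) := by
      ext s; exact EE_congr fun x hx => by rw [DD, Mt_Pt h.sm hφ s hx]
    rw [e1]
    convert h1 using 1
    obtain ⟨g1, g2⟩ := hp t ht
    have hft : Sm (fun x => f x / (1 + t * f x)) :=
      hf.div ((Sm.const 1).add ((Sm.const t).mul hf)) (fun x hx => (g2 x hx).ne')
    have hft0 : Hom 0 (fun x => f x / (1 + t * f x)) := by
      intro c hc x hx; simp only [hf0 c hc x hx]; simp
    have h2 := EE_first g1.sm g1.hom1 (fun x hx => (g1.pos hx).ne') hft hft0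
    have e2 : ∀ x ≠ 0, (fun y => f y / (1 + t * f y) * Pt H φ t y) x = φ x := by
      intro x hx
      have h3 := (g2 x hx).ne'
      have h4 : H x + t * (f x * H x) = (1 + t * f x) * H x := by ring
      simp only [Pt, hφd]; rw [h4, ← mul_assoc, div_mul_cancel₀ _ h3]
    rw [EE_congr (fun x hx => by rw [Mt_congr e2 hx, Mt_Pt h.sm hφ t hx])] at h2
    rw [h2]
    congr 1
    exact EE_congr fun x hx => by rw [DD, Mt_Pt h.sm hφ t hx]
  set c1 : Euc n → ℝ := fun x => ((Mt H x).adjugate * Mt φ x).trace with hc1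
  have dW : HasDerivAt W (EE (fun x => f x * c1 x - f x ^ 2 * DD H x)) 0 := by
    have h1 := dEE (g := fun t x => f x / (1 + t * f x) * (Mt H x + t • Mt φ x).det)
      (g' := fun t x => f x / (1 + t * f x) * ((Mt H x + t • Mt φ x).adjugate * Mt φ x).trace
        - (f x / (1 + t * f x))^2 * (Mt H x + t • Mt φ x).det)
      (fun t ht => (cq.mul cDet).comp (f := fun x : Euc n => (t, x)) (by fun_prop)
        (fun x hx => ⟨ht, hx⟩))
      ((cq.mul cT).sub ((cq.pow 2).mul cDet)) (fun t ht x hx => by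
        have g2 := ((hp t ht).2 x hx).ne'
        have d1 : HasDerivAt (fun s => 1 + s * f x) (f x) t := by
          simpa using ((hasDerivAt_id t).mul_const (f x)).const_add 1
        have d2 := (((hasDerivAt_const t (f x)).div d1 g2).mul
          (det_line (A := Mt H x) (B := Mt φ x) t))
        have e : ∀ u v a T d : ℝ, u ≠ 0 → a / u * T - (a/u)^2 * d
            = (0 * u - a * a) / u^2 * d + a / u * T := by
          intro u v a T d hu; field_simp; ring
        exact d2.congr_deriv (e _ 0 _ _ _ g2).symm) h0I
    convert h1 using 2
    ext x
    simp [hc1, DD]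
  have V0 : EE (DD H) = V 0 := EE_congr fun x hx => by rw [DD, DD, Mt_Pt h.sm hφ 0 hx]; simp
  have V0p : 0 < V 0 := by rw [← V0]; exact EE_pos (Sm_DD h.sm).cont (fun x hx => h.DD_pos hx)
  have dV' : deriv V =ᶠ[nhds 0] fun t => (n+1) * W t := by
    filter_upwards [Ioo_mem_nhds h0I.1 h0I.2] with t ht
    exact (dV t ht).deriv
  have W0 : W 0 = 0 := by
    refine Eq.trans (EE_congr fun x hx => ?_) hm
    simp [DD]
  have ddV : deriv (deriv V) 0 = (n+1) * EE (fun x => f x * c1 x - f x ^ 2 * DD H x) := by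
    rw [dV'.deriv_eq]; exact (dW.const_mul _).deriv
  have sec := EE_second h.sm h.hom1 (fun x hx => (h.pos hx).ne') hf hf0
  have e3 : EE (fun x => f x * c1 x - f x ^ 2 * DD H x) =
      EE (fun x => f x * c1 x) - EE (fun x => f x ^ 2 * DD H x) := by
    apply EE_sub
    · exact (hf.mul (Sm_tr h.sm hφ)).cont
    · exact (hf.cont.pow 2).mul (Sm_DD h.sm).cont
  by_contra hcon
  push Not at hcon
  have hpos : 0 < deriv (deriv V) 0 := by
    rw [ddV, e3, sec]
    apply mul_pos (by positivity)
    linarith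
  have hmin := isLocalMin_of_deriv_deriv_pos hpos (by rw [dV'.self_of_nhds]; simp only [W0, mul_zero])
    (dV 0 h0I).continuousAt
  have hmin' : ∀ᶠ t in nhds (0:ℝ), V 0 ≤ V (-t) := by
    have : Filter.Tendsto (fun t : ℝ => -t) (nhds 0) (nhds 0) := by
      simpa using (continuous_neg (G := ℝ)).tendsto 0
    exact this.eventually hmin
  have hconst : V =ᶠ[nhds 0] fun _ => V 0 := by
    filter_upwards [hmin, hmin', Ioo_mem_nhds h0I.1 h0I.2] with t h1 h2 ht
    have hb := BM h (hp t ht).1 (hp (-t) ⟨by linarith [ht.2], by linarith [ht.1]⟩).1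
      (fun x => by simp only [Pt]; ring)
    rw [V0] at hb
    change V t * V (-t) ≤ _ at hb
    nlinarith
  have : deriv (deriv V) 0 = 0 := by
    rw [hconst.deriv.deriv_eq]; simp
  linarith

lemma Sm.sq {F : Euc n → ℝ} (h : Sm F) : Sm (fun x => F x ^ 2) := ContDiffOn.pow h 2

lemma poincare {H f : Euc n → ℝ} (h : Good H) (hf : Sm f) (hf0 : Hom 0 f) :
    n * EE (fun x => f x ^ 2 * DD H x) ≤ EE (fun x => ∑ j, Yv H f j x * pd j f x)
      + n * (EE (fun x => f x * DD H x))^2 / EE (DD H) := by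
  have cD := (Sm_DD h.sm).cont
  have Dp : 0 < EE (DD H) := EE_pos cD (fun x hx => h.DD_pos hx)
  have sD := Sm_DD h.sm
  have f2 := Sm.sq hf
  set a := EE (fun x => f x * DD H x) with ha
  set m := a / EE (DD H) with hmd
  have hg : Sm (fun x => f x - m) := hf.sub (Sm.const m)
  have hpg : ∀ i, ∀ x ≠ 0, pd i (fun x => f x - m) x = pd i f x := by
    intro i x hx
    rw [pd_sub i (hf.diff hx) ((Sm.const m).diff hx), pd_const]; ring
  have k := poincare0 h hg (by intro c hc x hx; simp only [hf0 c hc x hx]; simp) (by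
    rw [EE_congr (G := fun x => f x * DD H x - m * DD H x) (fun x hx => by ring),
      EE_sub (hf.mul sD).cont ((Sm.const m).mul sD).cont, EE_const_mul, hmd]
    field_simp; linarith)
  have e1 : EE (fun x => ∑ j, Yv H (fun x => f x - m) j x * pd j (fun x => f x - m) x)
      = EE (fun x => ∑ j, Yv H f j x * pd j f x) := by
    apply EE_congr; intro x hx
    refine Finset.sum_congr rfl fun j _ => ?_
    simp only [Yv, hpg _ x hx]
  have e2 : EE (fun x => (f x - m)^2 * DD H x) = EE (fun x => f x ^ 2 * DD H x) - a^2 / EE (DD H) := by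
    rw [EE_congr (G := fun x => (f x^2 * DD H x - (2*m) * (f x * DD H x)) + m^2 * DD H x)
        (fun x hx => by ring),
      EE_add ((f2.mul sD).sub ((Sm.const (2*m)).mul (hf.mul sD))).cont
        ((Sm.const (m^2)).mul sD).cont,
      EE_sub (f2.mul sD).cont ((Sm.const (2*m)).mul (hf.mul sD)).cont,
      EE_const_mul, EE_const_mul, ← ha, hmd]
    field_simp; ring
  rw [e1, e2] at k
  have : (n:ℝ) * a^2 / EE (DD H) = n * (a^2 / EE (DD H)) := by ring
  rw [this]; linarith

end PGsec

section PHsec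
variable {n : ℕ}

def Vv (H : Euc n → ℝ) (i : Fin (n+1)) (x : Euc n) : ℝ := pd i H x - H x * x i / ‖x‖^2
def tau (H : Euc n → ℝ) (x : Euc n) : ℝ := ∑ i, pd i H x ^ 2
def LL (H : Euc n → ℝ) (x : Euc n) : ℝ := ∑ i, pd i (pd i H) x
def BB (H : Euc n → ℝ) (x : Euc n) : ℝ := ∑ i, ∑ j, pd i H x * pd j H x * pd i (pd j H) x

lemma Sm_nsq : Sm (fun x : Euc n => ‖x‖^2) := Sm.norm.sq

lemma nsq_ne : ∀ x : Euc n, x ≠ 0 → ‖x‖^2 ≠ 0 := fun x hx => pow_ne_zero 2 (norm_ne_zero_iff.2 hx)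

lemma Sm_Vv {H : Euc n → ℝ} (hs : Sm H) (i : Fin (n+1)) : Sm (Vv H i) :=
  (hs.pd i).sub ((hs.mul (Sm.coord i)).div Sm_nsq nsq_ne)
lemma Sm_tau {H : Euc n → ℝ} (hs : Sm H) : Sm (tau H) := Sm.sum fun i _ => (hs.pd i).sq
lemma Sm_LL {H : Euc n → ℝ} (hs : Sm H) : Sm (LL H) := Sm.sum fun i _ => (hs.pd i).pd i
lemma Sm_BB {H : Euc n → ℝ} (hs : Sm H) : Sm (BB H) :=
  Sm.sum fun i _ => Sm.sum fun j _ => ((hs.pd i).mul (hs.pd j)).mul ((hs.pd j).pd i)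
lemma Sm_k {H : Euc n → ℝ} (hs : Sm H) : Sm (fun x => H x / ‖x‖) :=
  hs.div Sm.norm (fun _ hx => norm_ne_zero_iff.2 hx)

lemma eul {H : Euc n → ℝ} (hs : Sm H) (hh : Hom 1 H) {x : Euc n} (hx : x ≠ 0) :
    ∑ i, x i * pd i H x = H x := by simpa using hh.euler hs hx

lemma x_V {H : Euc n → ℝ} (hs : Sm H) (hh : Hom 1 H) {x : Euc n} (hx : x ≠ 0) :
    ∑ i, x i * Vv H i x = 0 := by
  have e : ∀ i, x i * Vv H i x = x i * pd i H x - H x / ‖x‖^2 * (x i * x i) := by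
    intro i; simp only [Vv]; ring
  simp only [e, Finset.sum_sub_distrib, ← Finset.mul_sum, eul hs hh hx, ← nsq_eq]
  have := nsq_ne x hx
  field_simp; ring

lemma V_sq {H : Euc n → ℝ} (hs : Sm H) (hh : Hom 1 H) {x : Euc n} (hx : x ≠ 0) :
    ∑ i, Vv H i x ^ 2 = tau H x - (H x / ‖x‖)^2 := by
  have e : ∀ i, Vv H i x ^ 2 = pd i H x ^ 2 - 2 * H x / ‖x‖^2 * (x i * pd i H x)
      + (H x / ‖x‖^2)^2 * (x i * x i) := by
    intro i; simp only [Vv]; ring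
  simp only [e, Finset.sum_sub_distrib, Finset.sum_add_distrib, ← Finset.mul_sum, eul hs hh hx,
    ← nsq_eq, tau]
  have := norm_ne_zero_iff.2 hx
  field_simp; ring

lemma pd_k {H : Euc n → ℝ} (hs : Sm H) {x : Euc n} (hx : x ≠ 0) (i : Fin (n+1)) :
    pd i (fun y => H y / ‖y‖) x = Vv H i x / ‖x‖ := by
  have := norm_ne_zero_iff.2 hx
  rw [pd_div i (hs.diff hx) (Sm.norm.diff hx) this, pd_norm i hx, Vv]
  field_simp

lemma pd_tau {H : Euc n → ℝ} (hs : Sm H) {x : Euc n} (hx : x ≠ 0) (i : Fin (n+1)) :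
    pd i (tau H) x = 2 * ∑ j, pd j H x * pd i (pd j H) x := by
  unfold tau
  rw [pd_sum i (fun j _ => ((hs.pd j).sq).diff hx), Finset.mul_sum]
  refine Finset.sum_congr rfl fun j _ => ?_
  simp only [pow_two]
  rw [pd_mul i ((hs.pd j).diff hx) ((hs.pd j).diff hx)]; ring

lemma div_mul_rule {g : Euc n → ℝ} {Y : Fin (n+1) → Euc n → ℝ} (hg : Sm g) (hY : ∀ i, Sm (Y i))
    {x : Euc n} (hx : x ≠ 0) : ∑ i, pd i (fun y => g y * Y i y) x
      = ∑ i, pd i g x * Y i x + g x * ∑ i, pd i (Y i) x := by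
  rw [Finset.mul_sum, ← Finset.sum_add_distrib]
  exact Finset.sum_congr rfl fun i _ => pd_mul i (hg.diff hx) ((hY i).diff hx)

lemma div_V {H : Euc n → ℝ} (hs : Sm H) (hh : Hom 1 H) {x : Euc n} (hx : x ≠ 0) :
    ∑ i, pd i (Vv H i) x = LL H x - n * H x / ‖x‖^2 := by
  have hn := norm_ne_zero_iff.2 hx
  have e : ∀ i, pd i (Vv H i) x = pd i (pd i H) x - ((1 / ‖x‖^2) * (x i * pd i H x) + H x / ‖x‖^2
      - 2 * H x / ‖x‖^4 * (x i * x i)) := by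
    intro i
    unfold Vv
    rw [pd_sub i ((hs.pd i).diff hx) (((hs.mul (Sm.coord i)).div Sm_nsq nsq_ne).diff hx),
      pd_div i ((hs.mul (Sm.coord i)).diff hx) (Sm_nsq.diff hx) (nsq_ne x hx), pd_normsq,
      pd_mul i (hs.diff hx) ((Sm.coord i).diff hx), pd_coord]
    simp only [if_true]
    field_simp
  simp only [e, Finset.sum_sub_distrib, Finset.sum_add_distrib, ← Finset.mul_sum, eul hs hh hx,
    ← nsq_eq, LL]
  simp only [Finset.sum_const, Finset.card_univ, Fintype.card_fin, nsmul_eq_mul]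
  push_cast
  field_simp; ring

lemma tau_pos {H : Euc n → ℝ} (h : Good H) {x : Euc n} (hx : x ≠ 0) : 0 < tau H x := by
  have h1 : 0 ≤ ∑ i, Vv H i x ^ 2 := Finset.sum_nonneg fun i _ => sq_nonneg _
  rw [V_sq h.sm h.hom1 hx] at h1
  have : 0 < (H x / ‖x‖)^2 := pow_pos (div_pos (h.pos hx) (norm_pos_iff.2 hx)) 2
  linarith

lemma k_pos {H : Euc n → ℝ} (h : Good H) {x : Euc n} (hx : x ≠ 0) : 0 < H x / ‖x‖ :=
  div_pos (h.pos hx) (norm_pos_iff.2 hx)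

lemma hX_V {H : Euc n → ℝ} (hs : Sm H) (hh : Hom 1 H) {x : Euc n} (hx : x ≠ 0) :
    ∑ i, (∑ j, pd j H x * pd i (pd j H) x) * Vv H i x = BB H x := by
  have h1 : ∑ i, ∑ j, (H x / ‖x‖^2 * pd j H x) * (x i * pd i (pd j H) x) = 0 := by
    rw [Finset.sum_comm]; simp only [← Finset.mul_sum, hess_x hs hh hx]; simp
  have e : ∀ i, (∑ j, pd j H x * pd i (pd j H) x) * Vv H i x
    = ∑ j, pd i H x * pd j H x * pd i (pd j H) x
      - ∑ j, (H x / ‖x‖^2 * pd j H x) * (x i * pd i (pd j H) x) := by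
    intro i
    rw [Finset.sum_mul, ← Finset.sum_sub_distrib]
    refine Finset.sum_congr rfl fun j _ => ?_
    simp only [Vv]; ring
  simp only [e, Finset.sum_sub_distrib, h1, BB]; ring

/-- first divergence identity -/
lemma int1 {H : Euc n → ℝ} (h : Good H) (p b : ℝ) :
    EE (fun x => (H x / ‖x‖)^p * tau H x ^ (-b/2) * ((p+1) * ∑ i, Vv H i x ^ 2
      - b * (H x * BB H x / tau H x) + H x * LL H x - n * (H x / ‖x‖)^2)) = 0 := by
  have hs := h.sm
  have hh := h.hom1
  have sk : Sm (fun x => (H x / ‖x‖)^(p+1)) := (Sm_k hs).rpow (fun x hx => (k_pos h hx).ne') _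
  have st : Sm (fun x => tau H x ^ (-b/2)) := (Sm_tau hs).rpow (fun x hx => (tau_pos h hx).ne') _
  have sg : Sm (fun x => ‖x‖ * (H x / ‖x‖)^(p+1) * tau H x ^ (-b/2)) := (Sm.norm.mul sk).mul st
  rw [← EE_div (Y := fun i x => (‖x‖ * (H x / ‖x‖)^(p+1) * tau H x ^ (-b/2)) * Vv H i x)
    (fun i => sg.mul (Sm_Vv hs i)) (fun x hx => by
      have := x_V hs hh hx
      rw [Finset.sum_congr rfl (g := fun i => (‖x‖ * (H x / ‖x‖)^(p+1) * tau H x ^ (-b/2))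
        * (x i * Vv H i x)) (fun i _ => by ring), ← Finset.mul_sum, this, mul_zero])]
  apply EE_congr
  intro x hx
  have hn := norm_ne_zero_iff.2 hx
  have hk := k_pos h hx
  have ht := tau_pos h hx
  rw [div_mul_rule sg (Sm_Vv hs) hx, div_V hs hh hx]
  set K := (H x / ‖x‖)^p with hK
  set T := tau H x ^ (-b/2) with hT
  have eK : (H x / ‖x‖)^(p+1) = K * (H x / ‖x‖) := by rw [Real.rpow_add_one hk.ne']
  have eT : tau H x ^ (-b/2 - 1) = T / tau H x := by rw [Real.rpow_sub_one ht.ne']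
  have e : ∀ i, pd i (fun x => ‖x‖ * (H x / ‖x‖)^(p+1) * tau H x ^ (-b/2)) x * Vv H i x
      = (K * H x / ‖x‖^2 * T) * (x i * Vv H i x) + (p+1) * K * T * Vv H i x ^ 2
        + (- b * H x * K * (T / tau H x)) * ((∑ j, pd j H x * pd i (pd j H) x) * Vv H i x) := by
    intro i
    rw [pd_mul i ((Sm.norm.mul sk).diff hx) (st.diff hx), pd_mul i (Sm.norm.diff hx) (sk.diff hx),
      pd_norm i hx, pd_rpow i _ ((Sm_k hs).diff hx) hk.ne', pd_rpow i _ ((Sm_tau hs).diff hx) ht.ne',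
      pd_k hs hx, pd_tau hs hx, eT, eK, add_sub_cancel_right, ← hK, ← hT]
    field_simp
  simp only [e, Finset.sum_add_distrib, ← Finset.mul_sum, x_V hs hh hx, hX_V hs hh hx, eK]
  field_simp; ring

/-- second divergence identity -/
lemma int2 {H : Euc n → ℝ} (h : Good H) (p : ℝ) (j : Fin (n+1)) :
    n * EE (fun x => (H x / ‖x‖)^p * pd j H x)
      = (n+1+p) * EE (fun x => (H x / ‖x‖)^p * Vv H j x) := by
  have hs := h.sm
  have hh := h.hom1
  have sk : ∀ p : ℝ, Sm (fun x => (H x / ‖x‖)^p) := fun p =>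
    (Sm_k hs).rpow (fun x hx => (k_pos h hx).ne') _
  have sg : Sm (fun x => ‖x‖ * (H x / ‖x‖)^(p+1)) := Sm.norm.mul (sk _)
  have sz : ∀ i, Sm (fun x : Euc n => x j * x i / ‖x‖^2) := fun i =>
    ((Sm.coord j).mul (Sm.coord i)).div Sm_nsq nsq_ne
  have sY : ∀ i, Sm (fun x : Euc n => (if j = i then (1:ℝ) else 0) - x j * x i / ‖x‖^2) := fun i =>
    (Sm.const (if j = i then (1:ℝ) else 0)).sub (sz i)
  have tan : ∀ x : Euc n, x ≠ 0 →
      ∑ i, x i * ((if j = i then (1:ℝ) else 0) - x j * x i / ‖x‖^2) = 0 := by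
    intro x hx
    have e : ∀ i, x i * ((if j = i then (1:ℝ) else 0) - x j * x i / ‖x‖^2)
      = (if j = i then x i else 0) - x j / ‖x‖^2 * (x i * x i) := by
      intro i; split_ifs <;> ring
    simp only [e, Finset.sum_sub_distrib, ← Finset.mul_sum, ← nsq_eq]
    have := nsq_ne x hx
    simp; field_simp; ring
  have key := EE_div (Y := fun i x => (‖x‖ * (H x / ‖x‖)^(p+1)) *
      ((if j = i then (1:ℝ) else 0) - x j * x i / ‖x‖^2)) (fun i => sg.mul (sY i)) (fun x hx => by
      rw [Finset.sum_congr rfl (g := fun i => (‖x‖ * (H x / ‖x‖)^(p+1))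
        * (x i * ((if j = i then (1:ℝ) else 0) - x j * x i / ‖x‖^2))) (fun i _ => by ring),
        ← Finset.mul_sum, tan x hx, mul_zero])
  have e0 : EE (fun x => (n+1+p) * ((H x / ‖x‖)^p * Vv H j x) - n * ((H x / ‖x‖)^p * pd j H x))
      = 0 := by
    rw [← key]
    apply EE_congr
    intro x hx
    have hn := norm_ne_zero_iff.2 hx
    have hk := k_pos h hx
    rw [div_mul_rule sg sY hx]
    set K := (H x / ‖x‖)^p with hK
    have eK : (H x / ‖x‖)^(p+1) = K * (H x / ‖x‖) := by rw [Real.rpow_add_one hk.ne']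
    have e : ∀ i, pd i (fun x => ‖x‖ * (H x / ‖x‖)^(p+1)) x *
        ((if j = i then (1:ℝ) else 0) - x j * x i / ‖x‖^2)
        = (K * H x / ‖x‖^2) * (x i * ((if j = i then (1:ℝ) else 0) - x j * x i / ‖x‖^2))
          + (if j = i then (p+1) * K * Vv H i x else 0)
          - (p+1) * K * x j / ‖x‖^2 * (x i * Vv H i x) := by
      intro i
      rw [pd_mul i (Sm.norm.diff hx) ((sk _).diff hx),
        pd_norm i hx, pd_rpow i _ ((Sm_k hs).diff hx) hk.ne',
        pd_k hs hx, eK, add_sub_cancel_right, ← hK]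
      split_ifs
      · field_simp; ring
      · field_simp; ring
    have e' : ∀ i, pd i (fun x : Euc n => (if j = i then (1:ℝ) else 0) - x j * x i / ‖x‖^2) x
        = - ((if j = i then x i / ‖x‖^2 else 0) + x j / ‖x‖^2 - 2 * x j / ‖x‖^4 * (x i * x i)) := by
      intro i
      rw [pd_sub i ((Sm.const _).diff hx) ((sz i).diff hx), pd_const,
        pd_div i (((Sm.coord j).mul (Sm.coord i)).diff hx) (Sm_nsq.diff hx) (nsq_ne x hx), pd_normsq,
        pd_mul i ((Sm.coord j).diff hx) ((Sm.coord i).diff hx), pd_coord, pd_coord]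
      split_ifs
      · simp; field_simp; ring
      · simp at *
      · simp; field_simp; ring
      · simp at *
    simp only [e, e', Finset.sum_add_distrib, Finset.sum_sub_distrib, Finset.sum_neg_distrib,
      ← Finset.mul_sum, x_V hs hh hx, tan x hx, eK, ← nsq_eq]
    simp only [Finset.sum_ite_eq, Finset.mem_univ, if_true, Finset.sum_const, Finset.card_univ,
      Fintype.card_fin, nsmul_eq_mul]
    have e3 : pd j H x = Vv H j x + H x * x j / ‖x‖^2 := by simp only [Vv]; ring
    rw [e3]
    push_cast
    field_simp; ring
  rw [EE_sub ((Sm.const _).mul ((sk p).mul (Sm_Vv hs j))).cont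
    ((Sm.const _).mul ((sk p).mul (hs.pd j))).cont, EE_const_mul, EE_const_mul] at e0
  linarith

end PHsec

section PIsec
variable {n : ℕ}

lemma adj_hess {H : Euc n → ℝ} (hs : Sm H) (hh : Hom 1 H) {x : Euc n} (hx : x ≠ 0)
    (j l : Fin (n+1)) : ∑ i, (Mt H x).adjugate j i * (‖x‖ * pd i (pd l H) x)
      = DD H x * ((if j = l then 1 else 0) - x j * x l / ‖x‖^2) := by
  have hn := norm_ne_zero_iff.2 hx
  have h1 := adj_T hs hh hx j
  have h2 : ∑ i, (Mt H x).adjugate j i * Mt H x i l = DD H x * (if j = l then 1 else 0) := by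
    have := congrFun (congrFun (Matrix.adjugate_mul (Mt H x)) j) l
    rw [Matrix.mul_apply] at this
    rw [this, Matrix.smul_apply, Matrix.one_apply]; rfl
  have e : ∀ i, (Mt H x).adjugate j i * (‖x‖ * pd i (pd l H) x)
      = (Mt H x).adjugate j i * Mt H x i l
        - x l / ‖x‖^2 * ((Mt H x).adjugate j i * (‖x‖ * pd i H x)) := by
    intro i
    rw [Mt_eq hs hx, pd_comm hs i l hx]; field_simp; ring
  simp only [e, Finset.sum_sub_distrib, ← Finset.mul_sum, h1, h2]
  ring

lemma Yv_quad {H f : Euc n → ℝ} (hs : Sm H) (hh : Hom 1 H) {x : Euc n} (hx : x ≠ 0)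
    (u : Fin (n+1) → ℝ) (hu : ∀ i, pd i f x = ∑ l, pd i (pd l H) x * u l) :
    ∑ j, Yv H f j x * pd j f x = H x * DD H x * ∑ i, ∑ l, u i * u l * pd i (pd l H) x := by
  have hY : ∀ j, Yv H f j x = H x * DD H x * (u j - x j / ‖x‖^2 * ∑ l, x l * u l) := by
    intro j
    have e : ∀ i, (Mt H x).adjugate j i * (‖x‖ * H x * pd i f x)
        = ∑ l, H x * u l * ((Mt H x).adjugate j i * (‖x‖ * pd i (pd l H) x)) := by
      intro i
      rw [hu i, Finset.mul_sum, Finset.mul_sum]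
      exact Finset.sum_congr rfl fun l _ => by ring
    have e2 : ∀ l, H x * u l * (DD H x * ((if j = l then 1 else 0) - x j * x l / ‖x‖^2))
        = (if j = l then H x * DD H x * u l else 0) - H x * DD H x * (x j / ‖x‖^2) * (x l * u l) := by
      intro l; split_ifs <;> ring
    unfold Yv
    rw [Finset.sum_congr rfl (fun i _ => e i), Finset.sum_comm]
    simp only [← Finset.mul_sum, adj_hess hs hh hx, e2, Finset.sum_sub_distrib]
    simp; ring
  have h0 : ∑ j, x j * pd j f x = 0 := by
    simp only [hu, Finset.mul_sum]
    rw [Finset.sum_comm]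
    have : ∀ l, ∑ j, x j * (pd j (pd l H) x * u l) = 0 := by
      intro l
      rw [Finset.sum_congr rfl (g := fun j => u l * (x j * pd j (pd l H) x)) (fun j _ => by ring),
        ← Finset.mul_sum, hess_x hs hh hx, mul_zero]
    simp [this]
  have e3 : ∀ j, Yv H f j x * pd j f x = H x * DD H x * (u j * pd j f x)
      - H x * DD H x * (1 / ‖x‖^2 * ∑ l, x l * u l) * (x j * pd j f x) := by
    intro j; rw [hY j]; ring
  simp only [e3, Finset.sum_sub_distrib, ← Finset.mul_sum, h0, mul_zero, sub_zero]
  congr 1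
  refine Finset.sum_congr rfl fun j _ => ?_
  rw [hu j, Finset.mul_sum]
  exact Finset.sum_congr rfl fun l _ => by ring

def Fk (H : Euc n → ℝ) (b : ℝ) (k : Fin (n+1)) (x : Euc n) : ℝ := tau H x ^ (-b/2) * pd k H x

lemma Sm_Fk {H : Euc n → ℝ} (h : Good H) (b : ℝ) (k : Fin (n+1)) : Sm (Fk H b k) :=
  ((Sm_tau h.sm).rpow (fun x hx => (tau_pos h hx).ne') _).mul (h.sm.pd k)

lemma Hom_pdH {H : Euc n → ℝ} (h : Good H) (k : Fin (n+1)) : Hom 0 (pd k H) := by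
  have := h.hom1.pd k; simpa using this

lemma Hom_tau {H : Euc n → ℝ} (h : Good H) : Hom 0 (tau H) := by
  intro c hc x hx
  simp only [tau, Hom_pdH h _ c hc x hx]; simp

lemma Hom_Fk {H : Euc n → ℝ} (h : Good H) (b : ℝ) (k : Fin (n+1)) : Hom 0 (Fk H b k) := by
  intro c hc x hx
  simp only [Fk, Hom_pdH h _ c hc x hx, Hom_tau h c hc x hx]; simp

lemma Fk_pd {H : Euc n → ℝ} (h : Good H) (b : ℝ) (k : Fin (n+1)) {x : Euc n} (hx : x ≠ 0)
    (i : Fin (n+1)) : pd i (Fk H b k) x = ∑ l, pd i (pd l H) x *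
      (tau H x ^ (-b/2) * ((if k = l then 1 else 0) - b * pd k H x * pd l H x / tau H x)) := by
  have ht := tau_pos h hx
  have hs := h.sm
  have st : Sm (fun x => tau H x ^ (-b/2)) := (Sm_tau hs).rpow (fun x hx => (tau_pos h hx).ne') _
  have e : ∀ l, pd i (pd l H) x *
      (tau H x ^ (-b/2) * ((if k = l then 1 else 0) - b * pd k H x * pd l H x / tau H x))
      = (if k = l then tau H x ^ (-b/2) * pd i (pd l H) x else 0)
       - tau H x ^ (-b/2) * (b * pd k H x / tau H x) * (pd l H x * pd i (pd l H) x) := by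
    intro l; split_ifs <;> ring
  simp only [e, Finset.sum_sub_distrib, ← Finset.mul_sum]
  unfold Fk
  rw [pd_mul i (st.diff hx) ((hs.pd k).diff hx), pd_rpow i _ ((Sm_tau hs).diff hx) ht.ne',
    pd_tau hs hx, Real.rpow_sub_one ht.ne']
  simp; field_simp; ring

lemma Fk_sum {H : Euc n → ℝ} (h : Good H) (b : ℝ) {x : Euc n} (hx : x ≠ 0) :
    ∑ k, ∑ j, Yv H (Fk H b k) j x * pd j (Fk H b k) x
      = H x * DD H x * (tau H x ^ (-b/2))^2 * (LL H x - (2*b-b^2) * BB H x / tau H x) := by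
  have ht := tau_pos h hx
  rw [Finset.sum_congr rfl (fun k _ => Yv_quad h.sm h.hom1 hx _ (Fk_pd h b k hx)),
    ← Finset.mul_sum, mul_assoc (H x * DD H x)]
  congr 1
  set T := tau H x ^ (-b/2)
  rw [Finset.sum_comm]
  have e : ∀ i l, ∑ k, (T * ((if k = i then 1 else 0) - b * pd k H x * pd i H x / tau H x)) *
      (T * ((if k = l then 1 else 0) - b * pd k H x * pd l H x / tau H x)) * pd i (pd l H) x
      = (if i = l then T^2 * pd i (pd l H) x else 0)
        - T^2 * ((2*b-b^2)/tau H x) * (pd i H x * pd l H x * pd i (pd l H) x) := by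
    intro i l
    have e1 : ∀ k, (T * ((if k = i then 1 else 0) - b * pd k H x * pd i H x / tau H x)) *
      (T * ((if k = l then 1 else 0) - b * pd k H x * pd l H x / tau H x)) * pd i (pd l H) x
      = (if k = i then (if k = l then T^2 * pd i (pd l H) x else 0) else 0)
        - (if k = i then T^2 * pd i (pd l H) x * (b * pd k H x * pd l H x / tau H x) else 0)
        - (if k = l then T^2 * pd i (pd l H) x * (b * pd k H x * pd i H x / tau H x) else 0)
        + T^2 * pd i (pd l H) x * (b^2 * pd i H x * pd l H x / tau H x^2) * (pd k H x)^2 := by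
      intro k; split_ifs <;> ring
    simp only [e1, Finset.sum_add_distrib, Finset.sum_sub_distrib, ← Finset.mul_sum]
    have e4 : ∑ k, pd k H x ^ 2 = tau H x := rfl
    rw [e4]
    simp
    split_ifs <;> (field_simp; ring)
  have e2 : ∀ i, ∑ k, ∑ l, (T * ((if k = i then 1 else 0) - b * pd k H x * pd i H x / tau H x)) *
      (T * ((if k = l then 1 else 0) - b * pd k H x * pd l H x / tau H x)) * pd i (pd l H) x
      = T^2 * pd i (pd i H) x
        - T^2 * ((2*b-b^2)/tau H x) * ∑ l, (pd i H x * pd l H x * pd i (pd l H) x) := by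
    intro i
    rw [Finset.sum_comm, Finset.sum_congr rfl (fun l _ => e i l), Finset.sum_sub_distrib,
      Finset.mul_sum]
    simp
  rw [Finset.sum_congr rfl (fun i _ => e2 i), Finset.sum_sub_distrib, ← Finset.mul_sum,
    ← Finset.mul_sum]
  simp only [LL, BB]; ring

lemma core {H : Euc n → ℝ} (h : Good H) {p b : ℝ} (hn : 1 ≤ n) (hb0 : 0 ≤ b) (hb1 : b ≤ 1)
    (ha0 : 0 < (n:ℝ)+1+p) (ha1 : p ≤ -1)
    (hD : ∀ x ≠ 0, DD H x = (H x / ‖x‖)^p * tau H x ^ (b/2)) :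
    ∃ c : Fin (n+1) → ℝ, ∀ x : Euc n, 1 < ‖x‖^2 → ‖x‖^2 < 3 → ∀ j,
      Vv H j x = c j * tau H x ^ (b/2) := by
  have hs := h.sm
  have hh := h.hom1
  have hn' : (0:ℝ) < n := by exact_mod_cast hn
  have sk : Sm (fun x => (H x / ‖x‖)^p) := (Sm_k hs).rpow (fun x hx => (k_pos h hx).ne') _
  have st : ∀ r : ℝ, Sm (fun x => tau H x ^ r) := fun r =>
    (Sm_tau hs).rpow (fun x hx => (tau_pos h hx).ne') _
  set w : Euc n → ℝ := fun x => (H x / ‖x‖)^p * tau H x ^ (-b/2) with hw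
  have sw : Sm w := sk.mul (st _)
  have wpos : ∀ x ≠ 0, 0 < w x := fun x hx =>
    mul_pos (Real.rpow_pos_of_pos (k_pos h hx) _) (Real.rpow_pos_of_pos (tau_pos h hx) _)
  have sV2 : Sm (fun x => ∑ i, Vv H i x ^ 2) := Sm.sum fun i _ => (Sm_Vv hs i).sq
  have sTh : Sm (fun x => H x * BB H x / tau H x) :=
    (hs.mul (Sm_BB hs)).div (Sm_tau hs) (fun x hx => (tau_pos h hx).ne')
  have sD := Sm_DD hs
  have Ep : 0 < EE (DD H) := EE_pos sD.cont (fun x hx => h.DD_pos hx)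
  set E := EE (DD H) with hE
  have hpow : ∀ x ≠ 0, tau H x ^ (-b/2) * tau H x ^ (b/2) = 1 := by
    intro x hx
    rw [← Real.rpow_add (tau_pos h hx)]
    have : -b/2 + b/2 = 0 := by ring
    rw [this, Real.rpow_zero]
  have hpow2 : ∀ x ≠ 0, 0 < tau H x ^ (b/2) := fun x hx => Real.rpow_pos_of_pos (tau_pos h hx) _
  set v : Fin (n+1) → ℝ := fun j => EE (fun x => (H x / ‖x‖)^p * Vv H j x) with hv
  set A := EE (fun x => w x * ∑ i, Vv H i x ^ 2) with hA
  set Th := EE (fun x => w x * (H x * BB H x / tau H x)) with hTh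
  set Lh := EE (fun x => w x * (H x * LL H x)) with hLh
  set K2 := EE (fun x => w x * (H x / ‖x‖)^2) with hK2
  -- identity 1
  have i1 : (p+1) * A - b * Th + Lh - n * K2 = 0 := by
    have := int1 h p b
    rw [EE_congr (G := fun x => (((p+1) * (w x * ∑ i, Vv H i x ^ 2))
      - b * (w x * (H x * BB H x / tau H x)) + w x * (H x * LL H x)) - n * (w x * (H x / ‖x‖)^2))
      (fun x hx => by simp only [hw]; ring)] at this
    have s1 := (Sm.const (p+1)).mul (sw.mul sV2)
    have s2 := (Sm.const b).mul (sw.mul sTh)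
    have s3 := sw.mul (hs.mul (Sm_LL hs))
    have s4 := (Sm.const (n:ℝ)).mul (sw.mul (Sm_k hs).sq)
    rw [EE_sub ((s1.sub s2).add s3).cont s4.cont, EE_add (s1.sub s2).cont s3.cont,
      EE_sub s1.cont s2.cont, EE_const_mul, EE_const_mul, EE_const_mul] at this
    exact this
  -- Poincare
  have i2 : n * (A + K2) ≤ (Lh - (2*b-b^2) * Th) + n * ∑ k, ((n+1+p)/n * v k)^2 / E := by
    have hP : ∀ k, n * EE (fun x => Fk H b k x ^ 2 * DD H x)
        ≤ EE (fun x => ∑ j, Yv H (Fk H b k) j x * pd j (Fk H b k) x)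
        + n * (((n+1+p)/n * v k)^2 / E) := by
      intro k
      have := poincare h (Sm_Fk h b k) (Hom_Fk h b k)
      have e : EE (fun x => Fk H b k x * DD H x) = (n+1+p)/n * v k := by
        rw [EE_congr (G := fun x => (H x / ‖x‖)^p * pd k H x) (fun x hx => by
          rw [hD x hx, Fk]
          calc _ = (tau H x ^ (-b/2) * tau H x ^ (b/2)) * ((H x / ‖x‖)^p * pd k H x) := by ring
            _ = _ := by rw [hpow x hx, one_mul])]
        have := int2 h p k
        rw [hv]; field_simp; linarith
      rw [e, mul_div_assoc] at this
      exact this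
    have hsum := Finset.sum_le_sum (s := Finset.univ) (fun k _ => hP k)
    rw [Finset.sum_add_distrib, ← Finset.mul_sum, ← Finset.mul_sum,
      ← EE_sum (fun k _ => ((Sm_Fk h b k).sq.mul sD).cont),
      ← EE_sum (fun k _ => (Sm.sum fun j _ => (Sm_Yv hs (Sm_Fk h b k) j).mul
        ((Sm_Fk h b k).pd j)).cont)] at hsum
    have e1 : EE (fun x => ∑ k, Fk H b k x ^ 2 * DD H x) = A + K2 := by
      rw [hA, hK2, ← EE_add (sw.mul sV2).cont (sw.mul (Sm_k hs).sq).cont]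
      apply EE_congr
      intro x hx
      rw [← Finset.sum_mul, V_sq hs hh hx, hD x hx]
      simp only [Fk, mul_pow, ← Finset.mul_sum]
      have e4 : ∑ k, pd k H x ^ 2 = tau H x := rfl
      rw [e4]
      calc _ = (tau H x ^ (-b/2) * tau H x ^ (b/2)) * (w x * tau H x) := by simp only [hw]; ring
        _ = _ := by rw [hpow x hx]; ring
    have e2 : EE (fun x => ∑ k, ∑ j, Yv H (Fk H b k) j x * pd j (Fk H b k) x)
        = Lh - (2*b-b^2) * Th := by
      rw [hLh, hTh, ← EE_const_mul, ← EE_sub (sw.mul (hs.mul (Sm_LL hs))).cont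
        ((Sm.const (2*b-b^2)).mul (sw.mul sTh)).cont]
      apply EE_congr
      intro x hx
      rw [Fk_sum h b hx, hD x hx]
      calc _ = (tau H x ^ (-b/2) * tau H x ^ (b/2)) * (w x * H x *
            (LL H x - (2*b-b^2) * BB H x / tau H x)) := by simp only [hw]; ring
        _ = _ := by rw [hpow x hx]; ring
    rw [e1, e2] at hsum
    exact hsum
  set S := ∑ k, v k ^ 2 / E with hS
  have eS : ∑ k, ((n+1+p)/n * v k)^2 / E = ((n+1+p)/n)^2 * S := by
    rw [hS, Finset.mul_sum]; exact Finset.sum_congr rfl fun k _ => by ring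
  have hThn : 0 ≤ Th := by
    apply EE_nonneg
    intro x hx
    refine mul_nonneg (wpos x hx).le (div_nonneg (mul_nonneg (h.pos hx).le ?_) (tau_pos h hx).le)
    have : BB H x = QQ H x (gr H x) := by simp [BB, QQ, gr]
    rw [this]
    by_cases hc : ∀ c : ℝ, gr H x ≠ c • x
    · exact (h.QQ_pos hx hc).le
    · push Not at hc
      obtain ⟨c, hc⟩ := hc
      have := QQ_add_x hs hh hx 0 c
      rw [zero_add] at this
      rw [hc, this]; simp [QQ]
  refine ⟨fun j => v j / E, ?_⟩
  have dS : EE (fun x => w x * ∑ j, (Vv H j x - v j / E * tau H x ^ (b/2))^2) = A - S := by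
    have e : ∀ x ≠ 0, w x * ∑ j, (Vv H j x - v j / E * tau H x ^ (b/2))^2
        = w x * ∑ j, Vv H j x ^ 2 - ∑ j, (2 * v j / E) * ((H x / ‖x‖)^p * Vv H j x)
          + (∑ j, (v j / E)^2) * DD H x := by
      intro x hx
      have h1 := hpow x hx
      rw [hD x hx, Finset.mul_sum, Finset.mul_sum, Finset.sum_mul, ← Finset.sum_sub_distrib,
        ← Finset.sum_add_distrib]
      refine Finset.sum_congr rfl fun j _ => ?_
      simp only [hw]
      set K := (H x / ‖x‖)^p
      set T := tau H x ^ (-b/2)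
      set R := tau H x ^ (b/2)
      linear_combination (-2 * K * Vv H j x * (v j / E) + K * R * (v j / E)^2) * h1
    rw [EE_congr e]
    have s2 : ∀ j, Sm (fun x => (2 * v j / E) * ((H x / ‖x‖)^p * Vv H j x)) := fun j =>
      (Sm.const _).mul (sk.mul (Sm_Vv hs j))
    rw [EE_add ((sw.mul sV2).sub (Sm.sum fun j _ => s2 j)).cont ((Sm.const _).mul sD).cont,
      EE_sub (sw.mul sV2).cont (Sm.sum fun j _ => s2 j).cont, EE_sum (fun j _ => (s2 j).cont),
      EE_const_mul]
    simp only [EE_const_mul]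
    have e5 : ∑ j, 2 * v j / E * v j = 2 * S := by
      rw [hS, Finset.mul_sum]; exact Finset.sum_congr rfl fun k _ => by ring
    have e6 : (∑ j, (v j / E)^2) * E = S := by
      rw [hS, Finset.sum_mul]; exact Finset.sum_congr rfl fun k _ => by field_simp
    change A - ∑ j, 2 * v j / E * v j + (∑ j, (v j / E)^2) * E = A - S
    rw [e5, e6]; ring
  have sdS : Sm (fun x => w x * ∑ j, (Vv H j x - v j / E * tau H x ^ (b/2))^2) :=
    sw.mul (Sm.sum fun j _ => ((Sm_Vv hs j).sub ((Sm.const _).mul (st _))).sq)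
  have Sn : 0 ≤ S := Finset.sum_nonneg fun k _ => by positivity
  have le0 : A - S ≤ 0 := by
    rw [eS] at i2
    set a : ℝ := n+1+p with ha
    have hab : a ≤ n := by linarith
    have e7 : (n:ℝ) * ((a/n)^2 * S) = a * (a / n) * S := by field_simp
    rw [e7] at i2
    have e8 : a / n ≤ 1 := by rw [div_le_one hn']; exact hab
    have e9 : a * (a/n) * S ≤ a * S := by
      have : a * (a/n) ≤ a * 1 := mul_le_mul_of_nonneg_left e8 ha0.le
      nlinarith
    have e10 : 0 ≤ b * (1-b) * Th := mul_nonneg (mul_nonneg hb0 (by linarith)) hThn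
    have e11 : a * (A - S) ≤ 0 := by
      have : a * A = n * A + (p+1) * A := by rw [ha]; ring
      nlinarith
    by_contra hc
    push Not at hc
    have := mul_pos ha0 hc
    linarith
  intro x h1 h2 j
  have hx : x ≠ 0 := by rintro rfl; simp at h1; linarith
  have hz := EE_zero_imp sdS.cont (fun x hx => mul_nonneg (wpos x hx).le
    (Finset.sum_nonneg fun k _ => sq_nonneg _)) (dS.trans_le le0) h1 h2
  have hz2 := (mul_eq_zero.1 hz).resolve_left (wpos x hx).ne'
  rw [Finset.sum_eq_zero_iff_of_nonneg (fun k _ => sq_nonneg _)] at hz2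
  have := pow_eq_zero_iff (two_ne_zero) |>.1 (hz2 j (Finset.mem_univ j))
  linarith

end PIsec

section PJsec
variable {n : ℕ}

lemma grad_gr {H : Euc n → ℝ} (x : Euc n) : gradient H x = gr H x := by
  apply ext_inner_right ℝ
  intro v
  rw [gr_inner, gradient, InnerProductSpace.toDual_symm_apply]

lemma gr_norm (H : Euc n → ℝ) (x : Euc n) : ‖gr H x‖ ^ 2 = tau H x := by
  rw [nsq_eq, tau]; exact Finset.sum_congr rfl fun i _ => by simp [gr, pow_two]

lemma Hom_k {H : Euc n → ℝ} (h : Good H) : Hom 0 (fun x => H x / ‖x‖) := by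
  intro c hc x hx
  simp only [h.hom c hc x, norm_smul, Real.norm_eq_abs, abs_of_pos hc]
  rw [mul_div_mul_left _ _ hc.ne']; simp

lemma DD_power {H : Euc n → ℝ} (h : Good H) {p b : ℝ}
    (heq : ∀ x ∈ sphere (0 : Euc n) 1,
      H x ^ (p - 1) * ‖gradient H x‖ ^ b * gaussCurv n H x = 1) :
    ∀ x ≠ 0, DD H x = (H x / ‖x‖)^p * tau H x ^ (b/2) := by
  have h1 : ∀ x : Euc n, ‖x‖ = 1 → DD H x = (H x / ‖x‖)^p * tau H x ^ (b/2) := by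
    intro x hx
    have hx0 : x ≠ 0 := by rintro rfl; simp at hx
    have hp := h.pos1 x hx
    have h2 := heq x (by simpa using hx)
    rw [grad_gr] at h2
    have e : ‖gr H x‖ ^ b = tau H x ^ (b/2) := by
      rw [← gr_norm, ← Real.rpow_natCast, ← Real.rpow_mul (norm_nonneg _)]
      congr 1; push_cast; ring
    have hd := h.DD_pos hx0
    have hg : gaussCurv n H x = H x / DD H x := by
      rw [DD_eq_bmat h.sm h.hom1 hx hp.ne']; simp [gaussCurv, sigman]
    rw [e, hg, Real.rpow_sub_one hp.ne'] at h2
    rw [hx, div_one]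
    field_simp at h2
    linarith
  intro x hx
  have hn : 0 < ‖x‖ := norm_pos_iff.2 hx
  have h2 := h1 (‖x‖⁻¹ • x) (by rw [norm_smul, norm_inv, norm_norm]; field_simp)
  have a1 := Hom_DD h.hom1 ‖x‖⁻¹ (inv_pos.2 hn) x hx
  have a2 := Hom_tau h ‖x‖⁻¹ (inv_pos.2 hn) x hx
  have a3 := Hom_k h ‖x‖⁻¹ (inv_pos.2 hn) x hx
  simp only [zpow_zero, one_mul] at a1 a2 a3
  rw [a1, a2, a3] at h2
  exact h2

lemma V_zero {H : Euc n → ℝ} (h : Good H) {b : ℝ} {c : Fin (n+1) → ℝ}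
    (hc : ∀ x : Euc n, 1 < ‖x‖^2 → ‖x‖^2 < 3 → ∀ j, Vv H j x = c j * tau H x ^ (b/2)) :
    ∀ x ≠ 0, ∀ j, Vv H j x = 0 := by
  have S0 : sphere (0 : Euc n) 1 ⊆ {(0 : Euc n)}ᶜ := by
    rintro x hx rfl; simp at hx
  have hne : (sphere (0 : Euc n) 1).Nonempty := ⟨EuclideanSpace.single 0 1, by simp⟩
  obtain ⟨x0, hx0, hmax⟩ := (isCompact_sphere (0 : Euc n) 1).exists_isMaxOn hne
    ((Sm_k h.sm).cont.mono S0)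
  have hn0 : ‖x0‖ = 1 := by simpa using hx0
  have h00 : x0 ≠ 0 := S0 hx0
  have s2 : 0 < Real.sqrt 2 := by positivity
  set x1 : Euc n := Real.sqrt 2 • x0 with hx1
  have h10 : x1 ≠ 0 := smul_ne_zero s2.ne' h00
  have hn1 : ‖x1‖^2 = 2 := by
    rw [hx1, norm_smul, hn0, mul_one, Real.norm_eq_abs, sq_abs, Real.sq_sqrt (by norm_num)]
  have hloc : IsLocalMax (fun x => H x / ‖x‖) x1 := by
    filter_upwards [Om_nhds h10] with y hy
    have hy0 : y ≠ 0 := hy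
    have hny : 0 < ‖y‖ := norm_pos_iff.2 hy0
    have a := Hom_k h ‖y‖⁻¹ (inv_pos.2 hny) y hy0
    have a' := Hom_k h (Real.sqrt 2) s2 x0 h00
    simp only [zpow_zero, one_mul] at a a'
    change H y / ‖y‖ ≤ H x1 / ‖x1‖
    rw [hx1, a', ← a]
    exact hmax (by simp [norm_smul, hny.ne'])
  have hc0 : ∀ j, c j = 0 := by
    intro j
    have h1 := hc x1 (by rw [hn1]; norm_num) (by rw [hn1]; norm_num) j
    have h2 := pd_k h.sm h10 j
    have h3 : pd j (fun x => H x / ‖x‖) x1 = 0 := by rw [pd, hloc.fderiv_eq_zero]; simp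
    rw [h3] at h2
    have h4 : Vv H j x1 = 0 := by
      have := norm_ne_zero_iff.2 h10
      rcases div_eq_zero_iff.1 h2.symm with h | h
      · exact h
      · exact absurd h this
    rw [h4] at h1
    rcases mul_eq_zero.1 h1.symm with h5 | h5
    · exact h5
    · exact absurd h5 (Real.rpow_pos_of_pos (tau_pos h h10) _).ne'
  intro x hx j
  have hnx : 0 < ‖x‖ := norm_pos_iff.2 hx
  set d := Real.sqrt 2 / ‖x‖ with hd
  have hdp : 0 < d := div_pos s2 hnx
  have hnd : ‖d • x‖^2 = 2 := by
    rw [norm_smul, Real.norm_eq_abs, abs_of_pos hdp, hd, div_mul_cancel₀ _ hnx.ne',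
      Real.sq_sqrt (by norm_num)]
  have h1 := hc (d • x) (by rw [hnd]; norm_num) (by rw [hnd]; norm_num) j
  rw [hc0 j, zero_mul] at h1
  have h2 : Vv H j (d • x) = Vv H j x := by
    have a := Hom_pdH h j d hdp x hx
    simp only [zpow_zero, one_mul] at a
    simp only [Vv, a, h.hom d hdp x, norm_smul, Real.norm_eq_abs, abs_of_pos hdp]
    simp; field_simp
  rw [← h2]; exact h1

lemma k_const {H : Euc n → ℝ} (hn : 1 ≤ n) (h : Good H) (hV : ∀ x ≠ 0, ∀ j, Vv H j x = 0) :
    ∃ c, 0 < c ∧ ∀ x, H x = c * ‖x‖ := by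
  have hr : 1 < Module.rank ℝ (Euc n) := by
    rw [← Module.finrank_eq_rank, finrank_euclideanSpace_fin]
    exact_mod_cast (by omega : 1 < n + 1)
  obtain ⟨c, hc⟩ := Om_open.exists_is_const_of_fderiv_eq_zero
    (isConnected_compl_singleton_of_one_lt_rank hr (0 : Euc n)).isPreconnected
    (fun x hx => ((Sm_k h.sm).diff hx).differentiableWithinAt) (fun x hx => by
      ext v
      rw [fd_eq]
      simp only [pd_k h.sm hx, hV x hx]; simp)
  refine ⟨c, ?_, ?_⟩
  · have h0 : (EuclideanSpace.single 0 1 : Euc n) ≠ 0 := by simp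
    rw [← hc _ h0]; exact k_pos h h0
  · intro x
    by_cases hx : x = 0
    · subst hx; simp [h.zero]
    · rw [← hc x hx, div_mul_cancel₀ _ (norm_ne_zero_iff.2 hx)]

lemma c_one {H : Euc n → ℝ} (h : Good H) {c p b : ℝ} (hc : 0 < c) (hH : ∀ x, H x = c * ‖x‖)
    (hpb : p + b < n + 1)
    (hD : ∀ x ≠ 0, DD H x = (H x / ‖x‖)^p * tau H x ^ (b/2)) : c = 1 := by
  set x : Euc n := EuclideanSpace.single 0 1 with hxd
  have hx1 : ‖x‖ = 1 := by simp [hxd]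
  have hx : x ≠ 0 := by simp [hxd]
  have hpd : ∀ y : Euc n, y ≠ 0 → ∀ i, pd i H y = c * (y i / ‖y‖) := by
    intro y hy i
    rw [pd_congr (fun x _ => hH x) i hy, pd_const_mul i c (Sm.norm.diff hy), pd_norm i hy]
  have ht : tau H x = c^2 := by
    have e : ∀ i, pd i H x ^ 2 = c^2 * (x i * x i) := by
      intro i; rw [hpd x hx, hx1]; ring
    simp only [tau, e, ← Finset.mul_sum, ← nsq_eq, hx1]; ring
  have hM : Mt H x = c • (1 : Matrix (Fin (n+1)) (Fin (n+1)) ℝ) := by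
    ext i j
    simp only [Mt, Matrix.of_apply]
    rw [pd_congr (G := fun y => c * y i) (fun y hy => by
      have := norm_ne_zero_iff.2 hy
      rw [hpd y hy]; field_simp) j hx, pd_const_mul j c ((Sm.coord i).diff hx), pd_coord]
    simp [Matrix.one_apply]
  have h1 := hD x hx
  rw [DD, hM, Matrix.det_smul, Matrix.det_one, hH x, hx1, ht] at h1
  simp only [mul_one, div_one, Fintype.card_fin] at h1
  rw [← Real.rpow_natCast, ← Real.rpow_natCast, ← Real.rpow_mul hc.le, ← Real.rpow_add hc] at h1
  have h2 := congrArg Real.log h1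
  rw [Real.log_rpow hc, Real.log_rpow hc] at h2
  push_cast at h2
  have h3 : ((n:ℝ) + 1 - (p + b)) * Real.log c = 0 := by linear_combination h2
  have h4 := (mul_eq_zero.1 h3).resolve_left (by linarith)
  exact Real.eq_one_of_pos_of_log_eq_zero hc h4

lemma final_set : frontier {y : Euc n | ∀ x : Euc n, ⟪x, y⟫ ≤ ‖x‖} = sphere (0 : Euc n) 1 := by
  have : {y : Euc n | ∀ x : Euc n, ⟪x, y⟫ ≤ ‖x‖} = closedBall (0 : Euc n) 1 := by
    ext y
    rw [Set.mem_ofPred_eq, mem_closedBall_zero_iff]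
    constructor
    · intro hy
      have h1 := hy y
      rw [real_inner_self_eq_norm_sq] at h1
      by_contra hc
      push Not at hc
      nlinarith
    · intro hy x
      calc ⟪x, y⟫ ≤ ‖x‖ * ‖y‖ := real_inner_le_norm x y
        _ ≤ ‖x‖ * 1 := by gcongr
        _ = ‖x‖ := mul_one _
  rw [this, frontier_closedBall (0 : Euc n) one_ne_zero]

end PJsec

/-- If a smooth, closed, strictly convex hypersurface `M = ∂K` in `ℝ^{n+1}`
(`n ≥ 2`) enclosing the origin, with positive support function `h` (encoded by its
1-homogeneous extension `H`), satisfies the isotropic `L_p` dual Minkowski equation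
`h^{p-1} |Dh|^{n+1-q} 𝒦 = 1` on `S^n`, with `-(n+1) < p ≤ -1` and `n ≤ q ≤ n+1`,
then `M` is the unit sphere. -/
theorem isotropic_Lp_dual_Minkowski_uniqueness_case1
    (n : ℕ) (hn : 2 ≤ n) (p q : ℝ)
    (H : Euc n → ℝ) (K : Set (Euc n))
    (hK : K = {y : Euc n | ∀ x : Euc n, ⟪x, y⟫ ≤ H x})
    (hhomog : ∀ c : ℝ, 0 < c → ∀ x : Euc n, H (c • x) = c * H x)
    (hconv : ConvexOn ℝ Set.univ H)
    (hsmooth : ContDiffOn ℝ (⊤ : ℕ∞) H {(0 : Euc n)}ᶜ)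
    (hpos : ∀ x ∈ sphere (0 : Euc n) 1, 0 < H x)
    (hposdef : ∀ x ∈ sphere (0 : Euc n) 1, (bmat n H x).PosDef)
    (heq : ∀ x ∈ sphere (0 : Euc n) 1,
      H x ^ (p - 1) * ‖gradient H x‖ ^ ((n : ℝ) + 1 - q) * gaussCurv n H x = 1)
    (hp1 : -((n : ℝ) + 1) < p) (hp2 : p ≤ -1)
    (hq1 : (n : ℝ) ≤ q) (hq2 : q ≤ (n : ℝ) + 1) :
    frontier K = sphere (0 : Euc n) 1 := by
  have h : Good H := good_of_posdef hsmooth hhomog hpos hposdef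
  have hD := DD_power h heq
  obtain ⟨c, hc⟩ := core h (by omega) (by linarith) (by linarith) (by linarith) hp2 hD
  obtain ⟨r, hr, hH⟩ := k_const (by omega) h (V_zero h hc)
  have hn0 : (0:ℝ) ≤ n := Nat.cast_nonneg n
  have h1 : r = 1 := c_one h hr hH (by linarith) hD
  subst h1
  have : H = fun x => ‖x‖ := by ext x; rw [hH x, one_mul]
  rw [hK, this]
  exact final_set
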